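/- Let G be a second countable locally compact Hausdorff proper groupoid with unit space Y and left Haar system, and let P be a G-Hilbert module. Then there is a G-equivariant unitary isomorphism P ⊕ (P ⊗_{C_0(Y)} P_G^∞) ≅ P ⊗_{C_0(Y)} P_G^∞. -/

import Mathlib

/-!
The idea is that `C₀(Y)`, with the trivial action, is an equivariant orthogonal direct summand of
`P_G`, so that the trivial summand can be absorbed by shifting the coordinates of `P_G^∞`.

Since `G` is proper, there is a cutoff function: a continuous `c` on `Y`, with `c ∘ s` of compact
support over each compact subset of `Y` along `r`, such that `∫ c(s(g))² dλ^y(g) = 1` for all `y`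
(`exists_cutoff`).  Then `J f = (c ∘ s) · (f ∘ r)` is an isometric equivariant embedding of
`C₀(Y)` in `P_G` (`exists_J`).  Its image is complemented: every `η` factors as `q · k` with `k`
in `C₀(Y)` (`exists_factor`), and `⟨J k, q⟩` is then the value at `η` of the adjoint of `J`
(`exists_adjoint`).  As the action is unitary on fibers, the orthogonal complement `K` of the image
is invariant (`ActRel.complement`).

So `P_G ≅ C₀(Y) ⊕ K`, and `P ⊕ (P ⊗ P_G^∞)` is generated by the vectors `p · f`,
`p ⊗ ι_i (J f)` and `p ⊗ ι_i η` with `η` in `K`, where `ι_i` is the `i`-th coordinate embedding.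
The unitary fixes the last ones, sends `p · f` to `p ⊗ ι_0 (J f)`, and `p ⊗ ι_i (J f)` to
`p ⊗ ι_{i+1} (J f)`.  The two generating families have the same `C₀(Y)`-valued Gram matrix, hence
the assignment extends to a unitary (`exists_isometry`, `isometry_bijective`), and it is
equivariant because it is so on generators (`ActRel.map_of_generators`).

Fibers are handled through representatives: `P / I_y P` is compared with the seminorm
`p ↦ ⟨p, p⟩(y)^{1/2}`, whose kernel is exactly `I_y P`, again by `exists_factor`.
-/

noncomputable section
open scoped ZeroAtInfty
open Topology Filter ComplexConjugate

namespace Stabilization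

/-- The set of continuous sections vanishing at infinity of a family of normed fibers,
relative to a given topology on the total space of the bundle. -/
def C0Sections {Y : Type} [TopologicalSpace Y] (H : Y → Type)
    [∀ y, NormedAddCommGroup (H y)] (tE : TopologicalSpace ((y : Y) × H y)) :
    Set ((y : Y) → H y) :=
  {F | @Continuous Y ((y : Y) × H y) _ tE (fun y => ⟨y, F y⟩) ∧
    Tendsto (fun y => ‖F y‖) (cocompact Y) (nhds 0)}

/-- A Hilbert bundle over `Y` (Definition 2.1 of the paper): a family of Hilbert spaces
`H y` together with a second countable topology on the total space such that
(i) fiberwise addition and scalar multiplication are continuous, (ii) the norm along any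
continuous section vanishing at infinity is continuous, (iii) the continuous sections
vanishing at infinity fill out every fiber, and (iv) the sets `U_{F,ε}` form a base. -/
structure HilbertBundle (Y : Type) [TopologicalSpace Y] where
  H : Y → Type
  [nacg : ∀ y, NormedAddCommGroup (H y)]
  [ips : ∀ y, InnerProductSpace ℂ (H y)]
  [cpl : ∀ y, CompleteSpace (H y)]
  topE : TopologicalSpace ((y : Y) × H y)
  secondCountable : @SecondCountableTopology ((y : Y) × H y) topE
  add_cont : @Continuous {p : ((y : Y) × H y) × ((y : Y) × H y) // p.1.1 = p.2.1}
      ((y : Y) × H y)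
      (@instTopologicalSpaceSubtype _ _ (@instTopologicalSpaceProd _ _ topE topE)) topE
      (fun p => ⟨p.1.1.1, p.1.1.2 + cast (congrArg H p.2).symm p.1.2.2⟩)
  smul_cont : @Continuous (ℂ × (y : Y) × H y) ((y : Y) × H y)
      (@instTopologicalSpaceProd _ _ _ topE) topE
      (fun p => ⟨p.2.1, p.1 • p.2.2⟩)
  norm_cont : ∀ F ∈ C0Sections H topE, Continuous fun y => ‖F y‖
  fiber_full : ∀ (y : Y) (v : H y), ∃ F ∈ C0Sections H topE, F y = v
  isBasis : @TopologicalSpace.IsTopologicalBasis ((y : Y) × H y) topE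
      {S | ∃ (U : Set Y) (F : (y : Y) → H y) (ε : ℝ), IsOpen U ∧ F ∈ C0Sections H topE ∧
        0 < ε ∧ S = {e | e.1 ∈ U ∧ ‖e.2 - F e.1‖ < ε}}

attribute [instance] HilbertBundle.nacg HilbertBundle.ips HilbertBundle.cpl

/-- A Hilbert `C₀(Y)`-module structure on `P`: a right `C₀(Y)`-module action and a
`C₀(Y)`-valued inner product, complete for the norm `‖p‖ = ‖⟨p,p⟩‖^{1/2}` (completeness
being recorded by a `CompleteSpace` instance on `P` at use sites). -/
class HilbertCzeroModule (Y : Type) [TopologicalSpace Y] (P : Type)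
    [NormedAddCommGroup P] [NormedSpace ℂ P] where
  msmul : P → C₀(Y, ℂ) → P
  minner : P → P → C₀(Y, ℂ)
  msmul_add_left : ∀ (p q : P) (f : C₀(Y, ℂ)), msmul (p + q) f = msmul p f + msmul q f
  msmul_add_right : ∀ (p : P) (f g : C₀(Y, ℂ)), msmul p (f + g) = msmul p f + msmul p g
  msmul_mul : ∀ (p : P) (f g : C₀(Y, ℂ)), msmul (msmul p f) g = msmul p (f * g)
  msmul_csmul_left : ∀ (c : ℂ) (p : P) (f : C₀(Y, ℂ)), msmul (c • p) f = c • msmul p f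
  msmul_csmul_right : ∀ (c : ℂ) (p : P) (f : C₀(Y, ℂ)), msmul p (c • f) = c • msmul p f
  minner_add_right : ∀ p q r : P, minner p (q + r) = minner p q + minner p r
  minner_conj : ∀ p q : P, minner p q = star (minner q p)
  minner_csmul_right : ∀ (c : ℂ) (p q : P), minner p (c • q) = c • minner p q
  minner_msmul_right : ∀ (p q : P) (f : C₀(Y, ℂ)), minner p (msmul q f) = minner p q * f
  minner_self_re_nonneg : ∀ (p : P) (y : Y), 0 ≤ (minner p p y).re
  minner_self_im : ∀ (p : P) (y : Y), (minner p p y).im = 0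
  norm_eq : ∀ p : P, ‖p‖ = Real.sqrt ‖minner p p‖

/-- The module action, with the base space explicit. -/
def modSMul (Y : Type) [TopologicalSpace Y] {P : Type} [NormedAddCommGroup P]
    [NormedSpace ℂ P] [HilbertCzeroModule Y P] (p : P) (f : C₀(Y, ℂ)) : P :=
  HilbertCzeroModule.msmul p f

/-- The `C₀(Y)`-valued inner product, with the base space explicit. -/
def modIP (Y : Type) [TopologicalSpace Y] {P : Type} [NormedAddCommGroup P]
    [NormedSpace ℂ P] [HilbertCzeroModule Y P] (p q : P) : C₀(Y, ℂ) :=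
  HilbertCzeroModule.minner p q

variable (Y : Type) [TopologicalSpace Y]
variable (P : Type) [NormedAddCommGroup P] [NormedSpace ℂ P] [HilbertCzeroModule Y P]

/-- `I_y P`: the closed submodule generated by products `p·f` with `f(y) = 0`. -/
def fiberIdeal (y : Y) : Submodule ℂ P :=
  Submodule.span ℂ {x | ∃ (f : C₀(Y, ℂ)) (p : P), f y = 0 ∧ x = modSMul Y p f}

/-- The fiber `P_y = P / I_y P` of the Hilbert bundle associated to `P`. -/
abbrev Fib (y : Y) : Type := P ⧸ fiberIdeal Y P y

/-- `p ↦ p̂(y)`, the image of `p` in the fiber `P_y`. -/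
def fibMk (y : Y) : P → Fib Y P y := Submodule.Quotient.mk

/-- The fiber norm of `p̂(y)`, computed from a representative. -/
def fibNormRep (y : Y) (p : P) : ℝ := Real.sqrt ((modIP Y p p) y).re

/-- The norm on the fiber `P_y` (the common value of `fibNormRep` over representatives). -/
def fibNormQ (y : Y) (h : Fib Y P y) : ℝ :=
  sInf {r | ∃ p : P, h = fibMk Y P y p ∧ r = fibNormRep Y P y p}

/-- The total space `E_P = ⊔_y P_y` of the bundle associated to `P`. -/
abbrev TotalP : Type := (y : Y) × Fib Y P y

/-- The basic sets `U_{p,ε}` of the bundle `E_P`. -/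
def basisP : Set (Set (TotalP Y P)) :=
  {S | ∃ (U : Set Y) (p : P) (ε : ℝ), IsOpen U ∧ 0 < ε ∧
    S = {e : TotalP Y P | e.1 ∈ U ∧ fibNormQ Y P e.1 (e.2 - fibMk Y P e.1 p) < ε}}

/-- The topology on `E_P` generated by the sets `U_{p,ε}`. -/
def topEP : TopologicalSpace (TotalP Y P) := TopologicalSpace.generateFrom (basisP Y P)

/-- The continuous sections of `E_P` vanishing at infinity. -/
def C0SectionsP : Set ((y : Y) → Fib Y P y) :=
  {F | @Continuous Y (TotalP Y P) _ (topEP Y P) (fun y => ⟨y, F y⟩) ∧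
    Tendsto (fun y => fibNormQ Y P y (F y)) (cocompact Y) (nhds 0)}

/-- The section `p̂` associated to `p ∈ P`. -/
def hatSec (p : P) : (y : Y) → Fib Y P y := fun y => fibMk Y P y p

/-- Transport between fibers of `E_P` over equal base points. -/
def fcast {y z : Y} (h : y = z) : Fib Y P y → Fib Y P z := fun v => h ▸ v


variable (Y : Type) [TopologicalSpace Y]

/-- A second countable locally compact Hausdorff proper topological groupoid with unit
space `Y`.  Multiplication is recorded as a total map which is only constrained on
composable pairs. -/
structure LCGroupoid where
  G : Type
  [topG : TopologicalSpace G]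
  [t2G : T2Space G]
  [lcG : LocallyCompactSpace G]
  [scG : SecondCountableTopology G]
  [mG : MeasurableSpace G]
  [bG : BorelSpace G]
  r : G → Y
  s : G → Y
  unit : Y → G
  mul : G → G → G
  inv : G → G
  unit_embedding : Topology.IsEmbedding unit
  r_unit : ∀ y, r (unit y) = y
  s_unit : ∀ y, s (unit y) = y
  r_cont : Continuous r
  s_cont : Continuous s
  inv_cont : Continuous inv
  mul_cont : Continuous fun p : {p : G × G // s p.1 = r p.2} => mul p.1.1 p.1.2
  r_mul : ∀ g h, s g = r h → r (mul g h) = r g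
  s_mul : ∀ g h, s g = r h → s (mul g h) = s h
  mul_assoc : ∀ g h k, s g = r h → s h = r k → mul (mul g h) k = mul g (mul h k)
  mul_unit : ∀ g, mul g (unit (s g)) = g
  unit_mul : ∀ g, mul (unit (r g)) g = g
  r_inv : ∀ g, r (inv g) = s g
  s_inv : ∀ g, s (inv g) = r g
  mul_inv : ∀ g, mul g (inv g) = unit (r g)
  inv_mul : ∀ g, mul (inv g) g = unit (s g)
  proper : IsProperMap fun g => (r g, s g)

attribute [instance] LCGroupoid.topG LCGroupoid.t2G LCGroupoid.lcG LCGroupoid.scG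
  LCGroupoid.mG LCGroupoid.bG

variable (Gp : LCGroupoid Y)

/-- A left Haar system `{λ^y}` for the groupoid `Gp`:  `λ^y` is a Radon-type measure
concentrated on `G^y = r⁻¹(y)` with support `G^y`, varying continuously, and
left invariant. -/
structure HaarSystem where
  lam : Y → MeasureTheory.Measure Gp.G
  concentrated : ∀ y, lam y ((Gp.r ⁻¹' {y})ᶜ) = 0
  full : ∀ (y : Y) (U : Set Gp.G), IsOpen U → (U ∩ Gp.r ⁻¹' {y}).Nonempty → lam y U ≠ 0
  finiteOnCompacts : ∀ (y : Y) (K : Set Gp.G), IsCompact K → lam y K ≠ ⊤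
  integral_continuous : ∀ F : Gp.G → ℂ, Continuous F → HasCompactSupport F →
    Continuous fun y => ∫ g, F g ∂(lam y)
  left_invariant : ∀ (g₀ : Gp.G) (F : Gp.G → ℂ), Continuous F → HasCompactSupport F →
    ∫ g, F (Gp.mul g₀ g) ∂(lam (Gp.s g₀)) = ∫ g, F g ∂(lam (Gp.r g₀))

/-- Continuous compactly supported functions on the groupoid `Gp`. -/
def CcFun : Type := {F : Gp.G → ℂ // Continuous F ∧ HasCompactSupport F}


section GroupoidActions

variable {Y : Type} [TopologicalSpace Y] (Gp : LCGroupoid Y)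
variable (P : Type) [NormedAddCommGroup P] [NormedSpace ℂ P] [HilbertCzeroModule Y P]

/-- A continuous, unitary left action of the groupoid `Gp` on the Hilbert bundle `E_P`
associated to the Hilbert `C₀(Y)`-module `P`: this is the datum making `P` a
`G`-Hilbert module. -/
structure GAction where
  act : (g : Gp.G) → Fib Y P (Gp.s g) → Fib Y P (Gp.r g)
  act_add : ∀ (g : Gp.G) (v w : Fib Y P (Gp.s g)), act g (v + w) = act g v + act g w
  act_csmul : ∀ (g : Gp.G) (c : ℂ) (v : Fib Y P (Gp.s g)), act g (c • v) = c • act g v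
  act_norm : ∀ (g : Gp.G) (v : Fib Y P (Gp.s g)),
    fibNormQ Y P (Gp.r g) (act g v) = fibNormQ Y P (Gp.s g) v
  act_surjective : ∀ g : Gp.G, Function.Surjective (act g)
  act_unit : ∀ (y : Y) (v : Fib Y P y),
    act (Gp.unit y) (fcast Y P (Gp.s_unit y).symm v) = fcast Y P (Gp.r_unit y).symm v
  act_mul : ∀ (g h : Gp.G) (hc : Gp.s g = Gp.r h) (v : Fib Y P (Gp.s h)),
    act (Gp.mul g h) (fcast Y P (Gp.s_mul g h hc).symm v) =
      fcast Y P (Gp.r_mul g h hc).symm (act g (fcast Y P hc.symm (act h v)))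
  act_cont : @Continuous {q : Gp.G × TotalP Y P // Gp.s q.1 = q.2.1} (TotalP Y P)
    (@instTopologicalSpaceSubtype _ _ (@instTopologicalSpaceProd _ _ _ (topEP Y P)))
    (topEP Y P)
    (fun q => ⟨Gp.r q.1.1, act q.1.1 (fcast Y P q.2.symm q.1.2.2)⟩)

variable {Gp P}
variable {Q : Type} [NormedAddCommGroup Q] [NormedSpace ℂ Q] [HilbertCzeroModule Y Q]

/-- A `G`-equivariant unitary isomorphism of `G`-Hilbert modules:  a bijective,
`ℂ`-linear, `C₀(Y)`-linear, inner-product preserving map intertwining the `G`-actions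
on the associated Hilbert bundles. -/
def IsGEquivariantUnitary (T : P → Q) (AP : GAction Gp P) (AQ : GAction Gp Q) : Prop :=
  Function.Bijective T ∧
  (∀ p p' : P, T (p + p') = T p + T p') ∧
  (∀ (c : ℂ) (p : P), T (c • p) = c • T p) ∧
  (∀ (p : P) (f : C₀(Y, ℂ)), T (modSMul Y p f) = modSMul Y (T p) f) ∧
  (∀ p p' : P, modIP Y (T p) (T p') = modIP Y p p') ∧
  (∀ (g : Gp.G) (p p' : P),
      AP.act g (fibMk Y P (Gp.s g) p) = fibMk Y P (Gp.r g) p' →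
      AQ.act g (fibMk Y Q (Gp.s g) (T p)) = fibMk Y Q (Gp.r g) (T p'))

/-- Equivalence of `G`-Hilbert modules: existence of a `G`-equivariant unitary. -/
def GEquiv (AP : GAction Gp P) (AQ : GAction Gp Q) : Prop :=
  ∃ T : P → Q, IsGEquivariantUnitary T AP AQ

end GroupoidActions

section ModuleConstructions

variable {Y : Type} [TopologicalSpace Y] (Gp : LCGroupoid Y)

/-- Data exhibiting a Hilbert `C₀(Y)`-module `PG` as the completion `P_G` of the
pre-Hilbert `C₀(Y)`-module `C_c(G)`, with module action `F·f = F·(f∘r)` and inner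
product `⟨F₁,F₂⟩(y) = ∫_{G^y} conj F₁ · F₂ dλ^y`. -/
structure PGData (hs : HaarSystem Y Gp) (PG : Type) [NormedAddCommGroup PG]
    [NormedSpace ℂ PG] [HilbertCzeroModule Y PG] where
  emb : CcFun Y Gp → PG
  emb_add : ∀ F₁ F₂ F₃ : CcFun Y Gp, F₃.1 = F₁.1 + F₂.1 → emb F₃ = emb F₁ + emb F₂
  emb_csmul : ∀ (c : ℂ) (F₁ F₃ : CcFun Y Gp), F₃.1 = c • F₁.1 → emb F₃ = c • emb F₁
  emb_msmul : ∀ (F₁ F₃ : CcFun Y Gp) (f : C₀(Y, ℂ)),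
    F₃.1 = (fun g => F₁.1 g * f (Gp.r g)) → emb F₃ = modSMul Y (emb F₁) f
  emb_inner : ∀ (F₁ F₂ : CcFun Y Gp) (y : Y),
    modIP Y (emb F₁) (emb F₂) y = ∫ g, conj (F₁.1 g) * F₂.1 g ∂(hs.lam y)
  emb_dense : ∀ (p : PG) (ε : ℝ), 0 < ε → ∃ F : CcFun Y Gp, ‖p - emb F‖ < ε

variable {Gp}

/-- The natural left translation action of `G` on `L²(G) = E_{P_G}`, characterized on
the dense image of `C_c(G)` by `(g·ξ)(h) = ξ(g⁻¹h)` for `h ∈ G^{r(g)}`. -/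
def IsNaturalPGAction {hs : HaarSystem Y Gp} {PG : Type} [NormedAddCommGroup PG]
    [NormedSpace ℂ PG] [HilbertCzeroModule Y PG] (d : PGData Gp hs PG)
    (A : GAction Gp PG) : Prop :=
  ∀ (g : Gp.G) (F F' : CcFun Y Gp),
    (∀ h : Gp.G, Gp.r h = Gp.r g → F'.1 h = F.1 (Gp.mul (Gp.inv g) h)) →
    A.act g (fibMk Y PG (Gp.s g) (d.emb F)) = fibMk Y PG (Gp.r g) (d.emb F')

end ModuleConstructions

section TensorSum

/-- Data exhibiting `R` as the interior tensor product `P ⊗_{C₀(Y)} Q` of two Hilbert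
`C₀(Y)`-modules: a balanced bilinear map with dense span satisfying
`⟨p₁⊗q₁, p₂⊗q₂⟩ = ⟨p₁,p₂⟩⟨q₁,q₂⟩`. -/
structure TensorData (Y : Type) [TopologicalSpace Y] (P Q R : Type)
    [NormedAddCommGroup P] [NormedSpace ℂ P] [HilbertCzeroModule Y P]
    [NormedAddCommGroup Q] [NormedSpace ℂ Q] [HilbertCzeroModule Y Q]
    [NormedAddCommGroup R] [NormedSpace ℂ R] [HilbertCzeroModule Y R] where
  t : P → Q → R
  t_add_left : ∀ (p p' : P) (q : Q), t (p + p') q = t p q + t p' q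
  t_add_right : ∀ (p : P) (q q' : Q), t p (q + q') = t p q + t p q'
  t_csmul_left : ∀ (c : ℂ) (p : P) (q : Q), t (c • p) q = c • t p q
  t_csmul_right : ∀ (c : ℂ) (p : P) (q : Q), t p (c • q) = c • t p q
  t_msmul_left : ∀ (p : P) (q : Q) (f : C₀(Y, ℂ)), t (modSMul Y p f) q = modSMul Y (t p q) f
  t_msmul_right : ∀ (p : P) (q : Q) (f : C₀(Y, ℂ)), t p (modSMul Y q f) = modSMul Y (t p q) f
  t_inner : ∀ (p p' : P) (q q' : Q),
    modIP Y (t p q) (t p' q') = modIP Y p p' * modIP Y q q'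
  t_dense : ∀ (x : R) (ε : ℝ), 0 < ε →
    ∃ (n : ℕ) (ps : Fin n → P) (qs : Fin n → Q), ‖x - ∑ i, t (ps i) (qs i)‖ < ε

/-- Data exhibiting `S` as the Hilbert `C₀(Y)`-module direct sum `P ⊕ Q`. -/
structure SumData (Y : Type) [TopologicalSpace Y] (P Q S : Type)
    [NormedAddCommGroup P] [NormedSpace ℂ P] [HilbertCzeroModule Y P]
    [NormedAddCommGroup Q] [NormedSpace ℂ Q] [HilbertCzeroModule Y Q]
    [NormedAddCommGroup S] [NormedSpace ℂ S] [HilbertCzeroModule Y S] where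
  inl : P → S
  inr : Q → S
  inl_add : ∀ p p' : P, inl (p + p') = inl p + inl p'
  inr_add : ∀ q q' : Q, inr (q + q') = inr q + inr q'
  inl_csmul : ∀ (c : ℂ) (p : P), inl (c • p) = c • inl p
  inr_csmul : ∀ (c : ℂ) (q : Q), inr (c • q) = c • inr q
  inl_msmul : ∀ (p : P) (f : C₀(Y, ℂ)), inl (modSMul Y p f) = modSMul Y (inl p) f
  inr_msmul : ∀ (q : Q) (f : C₀(Y, ℂ)), inr (modSMul Y q f) = modSMul Y (inr q) f
  inner_ll : ∀ p p' : P, modIP Y (inl p) (inl p') = modIP Y p p'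
  inner_rr : ∀ q q' : Q, modIP Y (inr q) (inr q') = modIP Y q q'
  inner_lr : ∀ (p : P) (q : Q), modIP Y (inl p) (inr q) = 0
  total : ∀ x : S, ∃ (p : P) (q : Q), x = inl p + inr q

/-- Data exhibiting `S` as the Hilbert `C₀(Y)`-module direct sum `⊕_{i=1}^∞ P i` of a
sequence of Hilbert `C₀(Y)`-modules: the module of sequences `{p_i}`, `p_i ∈ P i`, with
`Σ_i ⟨p_i,p_i⟩` convergent in `C₀(Y)`. -/
structure InftySumData (Y : Type) [TopologicalSpace Y] (Pf : ℕ → Type) (S : Type)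
    [∀ i, NormedAddCommGroup (Pf i)] [∀ i, NormedSpace ℂ (Pf i)]
    [∀ i, HilbertCzeroModule Y (Pf i)]
    [NormedAddCommGroup S] [NormedSpace ℂ S] [HilbertCzeroModule Y S] where
  proj : (i : ℕ) → S → Pf i
  proj_add : ∀ (i : ℕ) (x x' : S), proj i (x + x') = proj i x + proj i x'
  proj_csmul : ∀ (i : ℕ) (c : ℂ) (x : S), proj i (c • x) = c • proj i x
  proj_msmul : ∀ (i : ℕ) (x : S) (f : C₀(Y, ℂ)),
    proj i (modSMul Y x f) = modSMul Y (proj i x) f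
  proj_inner : ∀ x x' : S, HasSum (fun i => modIP Y (proj i x) (proj i x')) (modIP Y x x')
  proj_injective : ∀ x x' : S, (∀ i, proj i x = proj i x') → x = x'
  proj_surjective : ∀ u : (i : ℕ) → Pf i, Summable (fun i => modIP Y (u i) (u i)) →
    ∃ x : S, ∀ i, proj i x = u i

variable {Y : Type} [TopologicalSpace Y] {Gp : LCGroupoid Y}
variable {P Q R S : Type}
  [NormedAddCommGroup P] [NormedSpace ℂ P] [HilbertCzeroModule Y P]
  [NormedAddCommGroup Q] [NormedSpace ℂ Q] [HilbertCzeroModule Y Q]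
  [NormedAddCommGroup R] [NormedSpace ℂ R] [HilbertCzeroModule Y R]
  [NormedAddCommGroup S] [NormedSpace ℂ S] [HilbertCzeroModule Y S]

/-- The diagonal `G`-action on a tensor product `P ⊗_{C₀(Y)} Q`. -/
def IsDiagonalAction (td : TensorData Y P Q R) (AP : GAction Gp P) (AQ : GAction Gp Q)
    (AR : GAction Gp R) : Prop :=
  ∀ (g : Gp.G) (p p' : P) (q q' : Q),
    AP.act g (fibMk Y P (Gp.s g) p) = fibMk Y P (Gp.r g) p' →
    AQ.act g (fibMk Y Q (Gp.s g) q) = fibMk Y Q (Gp.r g) q' →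
    AR.act g (fibMk Y R (Gp.s g) (td.t p q)) = fibMk Y R (Gp.r g) (td.t p' q')

/-- The coordinatewise `G`-action on a direct sum `P ⊕ Q`. -/
def IsCoordinateSumAction (sd : SumData Y P Q S) (AP : GAction Gp P) (AQ : GAction Gp Q)
    (AS : GAction Gp S) : Prop :=
  (∀ (g : Gp.G) (p p' : P),
    AP.act g (fibMk Y P (Gp.s g) p) = fibMk Y P (Gp.r g) p' →
    AS.act g (fibMk Y S (Gp.s g) (sd.inl p)) = fibMk Y S (Gp.r g) (sd.inl p')) ∧
  (∀ (g : Gp.G) (q q' : Q),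
    AQ.act g (fibMk Y Q (Gp.s g) q) = fibMk Y Q (Gp.r g) q' →
    AS.act g (fibMk Y S (Gp.s g) (sd.inr q)) = fibMk Y S (Gp.r g) (sd.inr q'))

/-- The coordinatewise `G`-action on an infinite direct sum `⊕_{i=1}^∞ P i`. -/
def IsCoordinateInftyAction {Pf : ℕ → Type} [∀ i, NormedAddCommGroup (Pf i)]
    [∀ i, NormedSpace ℂ (Pf i)] [∀ i, HilbertCzeroModule Y (Pf i)]
    (d : InftySumData Y Pf S) (Af : (i : ℕ) → GAction Gp (Pf i))
    (AS : GAction Gp S) : Prop :=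
  ∀ (g : Gp.G) (x x' : S),
    AS.act g (fibMk Y S (Gp.s g) x) = fibMk Y S (Gp.r g) x' →
    ∀ i, (Af i).act g (fibMk Y (Pf i) (Gp.s g) (d.proj i x)) =
      fibMk Y (Pf i) (Gp.r g) (d.proj i x')

end TensorSum

/-! ### The `C₀(X)`-valued inner product -/

section HilbertModules

variable {X : Type} [TopologicalSpace X]
variable {E : Type} [NormedAddCommGroup E] [NormedSpace ℂ E] [HilbertCzeroModule X E]

theorem ip_add_right (p q r : E) : modIP X p (q + r) = modIP X p q + modIP X p r :=
  HilbertCzeroModule.minner_add_right p q r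

theorem ip_star (p q : E) : star (modIP X q p) = modIP X p q :=
  (HilbertCzeroModule.minner_conj p q).symm

theorem ip_conj_apply (p q : E) (y : X) : conj (modIP X q p y) = modIP X p q y := by
  rw [← ip_star p q]; rfl

theorem ip_add_left (p q r : E) : modIP X (p + q) r = modIP X p r + modIP X q r := by
  rw [← ip_star, ip_add_right, star_add, ip_star, ip_star]

theorem ip_smul_right (c : ℂ) (p q : E) : modIP X p (c • q) = c • modIP X p q :=
  HilbertCzeroModule.minner_csmul_right c p q

theorem ip_smul_left (c : ℂ) (p q : E) : modIP X (c • p) q = conj c • modIP X p q := by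
  rw [← ip_star, ip_smul_right, star_smul, ip_star]; rfl

theorem ip_msmul_right (p q : E) (f : C₀(X, ℂ)) :
    modIP X p (modSMul X q f) = modIP X p q * f :=
  HilbertCzeroModule.minner_msmul_right p q f

theorem ip_msmul_left (p q : E) (f : C₀(X, ℂ)) :
    modIP X (modSMul X p f) q = star f * modIP X p q := by
  rw [← ip_star, ip_msmul_right]
  ext y
  simp only [ZeroAtInftyContinuousMap.star_apply, ZeroAtInftyContinuousMap.mul_apply, star_mul']
  rw [← ip_conj_apply, mul_comm]
  simp

theorem ip_zero_right (p : E) : modIP X p (0 : E) = 0 := by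
  have := ip_smul_right (X := X) 0 p (0 : E)
  simpa using this

theorem ip_zero_left (p : E) : modIP X (0 : E) p = 0 := by
  rw [← ip_star, ip_zero_right, star_zero]

theorem ip_neg_right (p q : E) : modIP X p (-q) = - modIP X p q := by
  have := ip_smul_right (X := X) (-1) p q
  rw [neg_one_smul] at this
  rw [this]
  ext y
  simp

theorem ip_sub_right (p q r : E) : modIP X p (q - r) = modIP X p q - modIP X p r := by
  rw [sub_eq_add_neg, ip_add_right, ip_neg_right, sub_eq_add_neg]

theorem ip_sub_left (p q r : E) : modIP X (p - q) r = modIP X p r - modIP X q r := by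
  rw [← ip_star, ip_sub_right, star_sub, ip_star, ip_star]

theorem ip_sum_right {ι : Type*} (s : Finset ι) (p : E) (q : ι → E) :
    modIP X p (∑ i ∈ s, q i) = ∑ i ∈ s, modIP X p (q i) := by
  classical
  induction s using Finset.induction_on with
  | empty => simp [ip_zero_right]
  | insert a s ha ih => rw [Finset.sum_insert ha, Finset.sum_insert ha, ip_add_right, ih]

theorem ip_sum_left {ι : Type*} (s : Finset ι) (p : E) (q : ι → E) :
    modIP X (∑ i ∈ s, q i) p = ∑ i ∈ s, modIP X (q i) p := by
  classical
  induction s using Finset.induction_on with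
  | empty => simp [ip_zero_left]
  | insert a s ha ih => rw [Finset.sum_insert ha, Finset.sum_insert ha, ip_add_left, ih]

variable (E) in
/-- The positive semidefinite form `(p, q) ↦ ⟨p, q⟩(y)` at a point `y` of the base. -/
@[reducible] def fibCore (y : X) : PreInnerProductSpace.Core ℂ E where
  inner p q := modIP X p q y
  conj_inner_symm p q := ip_conj_apply p q y
  re_inner_nonneg p := HilbertCzeroModule.minner_self_re_nonneg p y
  add_left p q r := by simp [ip_add_left]
  smul_left p q c := by simp [ip_smul_left]

theorem fibNormRep_nonneg (y : X) (p : E) : 0 ≤ fibNormRep X E y p := Real.sqrt_nonneg _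

theorem fibNormRep_sq (y : X) (p : E) : fibNormRep X E y p ^ 2 = (modIP X p p y).re :=
  Real.sq_sqrt (HilbertCzeroModule.minner_self_re_nonneg p y)

theorem ip_self_apply (p : E) (y : X) : modIP X p p y = ((fibNormRep X E y p ^ 2 : ℝ) : ℂ) := by
  rw [fibNormRep_sq]
  apply Complex.ext
  · simp
  · rw [Complex.ofReal_im]; exact HilbertCzeroModule.minner_self_im p y

theorem norm_ip_apply_le (p q : E) (y : X) :
    ‖modIP X p q y‖ ≤ fibNormRep X E y p * fibNormRep X E y q :=
  let _ := fibCore E y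
  InnerProductSpace.Core.norm_inner_le_norm (𝕜 := ℂ) p q

theorem fibNormRep_add_le (y : X) (p q : E) :
    fibNormRep X E y (p + q) ≤ fibNormRep X E y p + fibNormRep X E y q := by
  let _ := fibCore E y
  exact @norm_add_le E
    (InnerProductSpace.Core.toSeminormedAddCommGroup (𝕜 := ℂ) (F := E)).toSeminormedAddGroup p q

theorem fibNormRep_neg (y : X) (p : E) : fibNormRep X E y (-p) = fibNormRep X E y p := by
  have : modIP X (-p) (-p) = modIP X p p := by
    rw [ip_neg_right, ← ip_star, ip_neg_right, star_neg, neg_neg, ip_star]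
  unfold fibNormRep
  rw [this]

theorem fibNormRep_zero (y : X) : fibNormRep X E y 0 = 0 := by
  simp [fibNormRep, ip_zero_right]

theorem fibNormRep_sub_comm (y : X) (p q : E) :
    fibNormRep X E y (p - q) = fibNormRep X E y (q - p) := by
  rw [← fibNormRep_neg, neg_sub]

theorem fibNormRep_msmul (y : X) (p : E) (f : C₀(X, ℂ)) :
    fibNormRep X E y (modSMul X p f) = fibNormRep X E y p * ‖f y‖ := by
  rw [← sq_eq_sq₀ (fibNormRep_nonneg _ _) (mul_nonneg (fibNormRep_nonneg _ _) (norm_nonneg _))]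
  have h : modIP X (modSMul X p f) (modSMul X p f) y
      = (((fibNormRep X E y p * ‖f y‖) ^ 2 : ℝ) : ℂ) := by
    rw [ip_msmul_left, ip_msmul_right]
    simp only [ZeroAtInftyContinuousMap.star_apply, ZeroAtInftyContinuousMap.mul_apply]
    rw [ip_self_apply, mul_left_comm, mul_pow]
    push_cast
    congr 1
    exact Complex.conj_mul' (f y)
  rw [fibNormRep_sq, h, Complex.ofReal_re]

theorem c0_norm_apply_le (f : C₀(X, ℂ)) (y : X) : ‖f y‖ ≤ ‖f‖ := by
  simpa using f.toBCF.norm_coe_le_norm y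

theorem c0_norm_le {f : C₀(X, ℂ)} {C : ℝ} (hC : 0 ≤ C) (h : ∀ y, ‖f y‖ ≤ C) : ‖f‖ ≤ C := by
  rw [← ZeroAtInftyContinuousMap.norm_toBCF_eq_norm]
  exact (BoundedContinuousFunction.norm_le hC).2 h

theorem norm_sq_eq_ip (X : Type) [TopologicalSpace X] [HilbertCzeroModule X E] (p : E) :
    ‖p‖ ^ 2 = ‖modIP X p p‖ := by
  rw [HilbertCzeroModule.norm_eq (Y := X) p, Real.sq_sqrt (norm_nonneg _)]; rfl

theorem fibNormRep_le_norm (y : X) (p : E) : fibNormRep X E y p ≤ ‖p‖ := by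
  rw [← sq_le_sq₀ (fibNormRep_nonneg _ _) (norm_nonneg _), norm_sq_eq_ip X]
  refine le_trans ?_ (c0_norm_apply_le _ y)
  rw [ip_self_apply, Complex.norm_real, Real.norm_eq_abs]
  exact le_abs_self _

theorem norm_le_of_fib {p : E} {C : ℝ} (hC : 0 ≤ C) (h : ∀ y : X, fibNormRep X E y p ≤ C) :
    ‖p‖ ≤ C := by
  rw [← sq_le_sq₀ (norm_nonneg _) hC, norm_sq_eq_ip X]
  refine c0_norm_le (by positivity) fun y => ?_
  rw [ip_self_apply, Complex.norm_real, Real.norm_eq_abs, abs_of_nonneg (sq_nonneg _)]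
  exact pow_le_pow_left₀ (fibNormRep_nonneg _ _) (h y) 2

theorem eq_zero_of_fib {p : E} (h : ∀ y : X, fibNormRep X E y p = 0) : p = 0 :=
  norm_le_zero_iff.1 (norm_le_of_fib (X := X) le_rfl fun y => (h y).le)

theorem eq_of_ip_sub_self {p q : E} (h : modIP X (p - q) (p - q) = 0) : p = q := by
  rw [← sub_eq_zero, ← norm_eq_zero, ← sq_eq_zero_iff, norm_sq_eq_ip X, h, norm_zero]

theorem norm_ip_le (p q : E) : ‖modIP X p q‖ ≤ ‖p‖ * ‖q‖ :=
  c0_norm_le (by positivity) fun y => (norm_ip_apply_le p q y).trans <|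
    mul_le_mul (fibNormRep_le_norm y p) (fibNormRep_le_norm y q) (fibNormRep_nonneg _ _)
      (norm_nonneg _)

theorem continuous_ip_right (p : E) : Continuous fun q : E => modIP X p q := by
  let L : E →ₗ[ℂ] C₀(X, ℂ) :=
    { toFun := fun q => modIP X p q
      map_add' := ip_add_right p
      map_smul' := fun c q => ip_smul_right c p q }
  exact (L.mkContinuous ‖p‖ fun q => norm_ip_le p q).continuous

theorem continuous_ip_left (p : E) : Continuous fun q : E => modIP X q p := by
  have : (fun q : E => modIP X q p) = fun q => star (modIP X p q) := by
    funext q; rw [ip_star]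
  rw [this]
  exact continuous_star.comp (continuous_ip_right p)

theorem msmul_sub_left (p q : E) (f : C₀(X, ℂ)) :
    modSMul X (p - q) f = modSMul X p f - modSMul X q f := by
  have h := HilbertCzeroModule.msmul_add_left (p - q) q f
  rw [sub_add_cancel] at h
  exact eq_sub_of_add_eq h.symm

theorem msmul_mul (p : E) (f g : C₀(X, ℂ)) :
    modSMul X (modSMul X p f) g = modSMul X p (f * g) :=
  HilbertCzeroModule.msmul_mul p f g

theorem continuous_msmul_left (f : C₀(X, ℂ)) : Continuous fun p : E => modSMul X p f := by
  let L : E →ₗ[ℂ] E :=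
    { toFun := fun q => modSMul X q f
      map_add' := fun p q => HilbertCzeroModule.msmul_add_left p q f
      map_smul' := fun c q => HilbertCzeroModule.msmul_csmul_left c q f }
  refine (L.mkContinuous ‖f‖ fun q => ?_).continuous
  refine norm_le_of_fib (X := X) (by positivity) fun y => ?_
  change fibNormRep X E y (modSMul X q f) ≤ _
  rw [fibNormRep_msmul, mul_comm]
  exact mul_le_mul (c0_norm_apply_le f y) (fibNormRep_le_norm y q) (fibNormRep_nonneg _ _)
    (norm_nonneg _)

/-- `p` is determined by its inner products. -/
theorem eq_of_ip_right {p q : E} (h : ∀ r, modIP X r p = modIP X r q) : p = q :=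
  eq_of_ip_sub_self (X := X) (by rw [ip_sub_right, h, sub_self])

theorem msmul_sub_right (p : E) (f g : C₀(X, ℂ)) :
    modSMul X p (f - g) = modSMul X p f - modSMul X p g :=
  eq_of_ip_right (X := X) fun r => by
    simp only [ip_msmul_right, ip_sub_right, mul_sub]

end HilbertModules

/-! ### Factorization and fibers -/

section Fibers

variable {X : Type} [TopologicalSpace X]
variable {E : Type} [NormedAddCommGroup E] [NormedSpace ℂ E] [HilbertCzeroModule X E]

theorem continuous_fibNormRep (p : E) : Continuous fun y : X => fibNormRep X E y p :=
  Real.continuous_sqrt.comp (Complex.continuous_re.comp (map_continuous (modIP X p p)))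

theorem tendsto_fibNormRep (p : E) :
    Tendsto (fun y : X => fibNormRep X E y p) (cocompact X) (𝓝 0) := by
  have h := (modIP X p p).zero_at_infty'
  have h2 := (Real.continuous_sqrt.comp Complex.continuous_re).tendsto 0 |>.comp h
  rw [Function.comp_apply, Complex.zero_re, Real.sqrt_zero] at h2
  exact h2

/-- The function `y ↦ k (|p|(y))` in `C₀(X)`, where `|p|(y) = ⟨p, p⟩(y)^{1/2}`, for
`k` continuous with `k 0 = 0`. -/
def absFun (X : Type) [TopologicalSpace X] [HilbertCzeroModule X E] (p : E) (k : ℝ → ℝ)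
    (hk : Continuous k) (h0 : k 0 = 0) : C₀(X, ℂ) where
  toFun y := (k (fibNormRep X E y p) : ℂ)
  continuous_toFun := Complex.continuous_ofReal.comp (hk.comp (continuous_fibNormRep p))
  zero_at_infty' := by
    have h2 := ((Complex.continuous_ofReal.comp hk).tendsto 0).comp (tendsto_fibNormRep (X := X) p)
    rw [Function.comp_apply, h0, Complex.ofReal_zero] at h2
    exact h2

theorem absFun_apply (p : E) (k : ℝ → ℝ) (hk : Continuous k) (h0 : k 0 = 0) (y : X) :
    absFun X p k hk h0 y = (k (fibNormRep X E y p) : ℂ) := rfl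

theorem factor_bound {s a ε : ℝ} (ha : 0 < a) (hε : a ≤ ε) :
    s * (a / (s ^ 2 + a)) ≤ √ε := by
  have h1 : s * (a / (s ^ 2 + a)) ≤ √a := by
    have hp : 0 < s ^ 2 + a := by positivity
    rw [mul_div_assoc', div_le_iff₀ hp]
    have hq : √a * √a = a := Real.mul_self_sqrt ha.le
    have h0 := Real.sqrt_nonneg a
    have h3 : √a * s ≤ s ^ 2 + a := by nlinarith [sq_nonneg (√a - s)]
    calc s * a = √a * (√a * s) := by rw [← mul_assoc, hq, mul_comm]
      _ ≤ √a * (s ^ 2 + a) := mul_le_mul_of_nonneg_left h3 h0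
  exact h1.trans (Real.sqrt_le_sqrt hε)

/-- Factorization `p = q · f` in a Hilbert `C₀(X)`-module, with `f = |p|^{1/2}`: here `q` is the
limit of `p · |p|^{1/2} / (|p| + ε)` as `ε → 0`. -/
theorem exists_factor [CompleteSpace E] (p : E) :
    ∃ (q : E) (f : C₀(X, ℂ)), p = modSMul X q f ∧ star f = f ∧
      ∀ y, fibNormRep X E y p = 0 → f y = 0 := by
  have hε : ∀ n : ℕ, (0 : ℝ) < 1 / ((n : ℝ) + 1) := fun n => by positivity
  let k : ℕ → C₀(X, ℂ) := fun n => absFun X p (fun t => √t / (|t| + 1 / ((n : ℝ) + 1)))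
    (by
      refine Continuous.div (by fun_prop) (by fun_prop) fun t => ?_
      have := hε n
      have := abs_nonneg t
      linarith) (by simp)
  let f : C₀(X, ℂ) := absFun X p (fun t => √t) (by fun_prop) (by simp)
  have hk : ∀ n y, k n y = ((√(fibNormRep X E y p) /
      (fibNormRep X E y p + 1 / ((n : ℝ) + 1)) : ℝ) : ℂ) := fun n y => by
    rw [absFun_apply, abs_of_nonneg (fibNormRep_nonneg _ _)]
  have hdiff : ∀ (s a : ℝ), 0 ≤ s → 0 < a →
      s ^ 2 * (s / (s ^ 2 + a)) = s - s * (a / (s ^ 2 + a)) := by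
    intro s a hs ha
    have hp : s ^ 2 + a ≠ 0 := by positivity
    field_simp
    ring
  have hcauchy : CauchySeq fun n => modSMul X p (k n) := by
    refine cauchySeq_of_le_tendsto_0 (fun n : ℕ => √(1 / ((n : ℝ) + 1))) ?_ ?_
    · intro n m N hn hm
      rw [dist_eq_norm, ← msmul_sub_right]
      refine norm_le_of_fib (X := X) (Real.sqrt_nonneg _) fun y => ?_
      rw [fibNormRep_msmul, ZeroAtInftyContinuousMap.sub_apply, hk, hk, ← Complex.ofReal_sub,
        Complex.norm_real, Real.norm_eq_abs]
      obtain ⟨s, hs, hs2⟩ : ∃ s : ℝ, 0 ≤ s ∧ fibNormRep X E y p = s ^ 2 :=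
        ⟨√(fibNormRep X E y p), Real.sqrt_nonneg _, (Real.sq_sqrt (fibNormRep_nonneg _ _)).symm⟩
      rw [hs2, Real.sqrt_sq hs]
      nth_rewrite 1 [← abs_of_nonneg (sq_nonneg s)]
      rw [← abs_mul, mul_sub, hdiff s _ hs (hε n), hdiff s _ hs (hε m)]
      have b1 := factor_bound (s := s) (hε n) (one_div_le_one_div_of_le (by positivity)
        (by gcongr : (N : ℝ) + 1 ≤ n + 1))
      have b2 := factor_bound (s := s) (hε m) (one_div_le_one_div_of_le (by positivity)
        (by gcongr : (N : ℝ) + 1 ≤ m + 1))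
      have c1 : 0 ≤ s * (1 / ((n : ℝ) + 1) / (s ^ 2 + 1 / ((n : ℝ) + 1))) := by positivity
      have c2 : 0 ≤ s * (1 / ((m : ℝ) + 1) / (s ^ 2 + 1 / ((m : ℝ) + 1))) := by positivity
      rw [abs_le]
      constructor <;> linarith
    · have := (Real.continuous_sqrt.tendsto 0).comp
        (tendsto_one_div_add_atTop_nhds_zero_nat (𝕜 := ℝ))
      rw [Real.sqrt_zero] at this
      exact this
  obtain ⟨q, hq⟩ := cauchySeq_tendsto_of_complete hcauchy
  refine ⟨q, f, ?_, ?_, ?_⟩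
  · have h1 := ((continuous_msmul_left (E := E) f).tendsto q).comp hq
    refine tendsto_nhds_unique ?_ h1
    rw [tendsto_iff_norm_sub_tendsto_zero]
    refine squeeze_zero (fun n => norm_nonneg _) (fun n => ?_)
      (tendsto_one_div_add_atTop_nhds_zero_nat (𝕜 := ℝ))
    refine norm_le_of_fib (X := X) (hε n).le fun y => ?_
    have hfac : fibNormRep X E y (modSMul X (modSMul X p (k n)) f - p) =
        fibNormRep X E y p * |√(fibNormRep X E y p) /
      (fibNormRep X E y p + 1 / ((n : ℝ) + 1)) * √(fibNormRep X E y p) - 1| := by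
      rw [← sq_eq_sq₀ (fibNormRep_nonneg _ _) (by positivity [fibNormRep_nonneg y p])]
      rw [fibNormRep_sq, msmul_mul]
      simp only [ip_sub_left, ip_sub_right, ip_msmul_left, ip_msmul_right,
        ZeroAtInftyContinuousMap.sub_apply, ZeroAtInftyContinuousMap.mul_apply,
        ZeroAtInftyContinuousMap.star_apply]
      rw [ip_self_apply, hk, absFun_apply, mul_pow, sq_abs]
      simp only [star_mul', RCLike.star_def, Complex.conj_ofReal]
      norm_cast
      ring
    rw [Function.comp_apply, hfac]
    obtain ⟨s, hs, hs2⟩ : ∃ s : ℝ, 0 ≤ s ∧ fibNormRep X E y p = s ^ 2 :=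
      ⟨√(fibNormRep X E y p), Real.sqrt_nonneg _, (Real.sq_sqrt (fibNormRep_nonneg _ _)).symm⟩
    rw [hs2, Real.sqrt_sq hs]
    have ha := hε n
    set a := 1 / ((n : ℝ) + 1)
    have hp : 0 < s ^ 2 + a := by positivity
    have : s / (s ^ 2 + a) * s - 1 = - (a / (s ^ 2 + a)) := by field_simp; ring
    rw [this, abs_neg, abs_of_nonneg (by positivity), mul_div_assoc', div_le_iff₀ hp]
    nlinarith
  · ext y
    simp [f, absFun_apply]
  · intro y hy
    simp [f, absFun_apply, hy]

theorem fibMk_add (y : X) (p q : E) : fibMk X E y (p + q) = fibMk X E y p + fibMk X E y q := rfl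
theorem fibMk_sub (y : X) (p q : E) : fibMk X E y (p - q) = fibMk X E y p - fibMk X E y q := rfl
theorem fibMk_smul (y : X) (c : ℂ) (p : E) : fibMk X E y (c • p) = c • fibMk X E y p := rfl
theorem fibMk_zero (y : X) : fibMk X E y (0 : E) = 0 := rfl

theorem fibMk_surjective (y : X) : Function.Surjective (fibMk X E y) :=
  Submodule.Quotient.mk_surjective _

theorem fibNormRep_of_mem {y : X} {p : E} (hp : p ∈ fiberIdeal X E y) :
    fibNormRep X E y p = 0 := by
  refine Submodule.span_induction ?_ (fibNormRep_zero y) ?_ ?_ hp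
  · rintro x ⟨f, q, hf, rfl⟩
    rw [fibNormRep_msmul, hf, norm_zero, mul_zero]
  · intro a b _ _ ha hb
    exact le_antisymm ((fibNormRep_add_le y a b).trans (by rw [ha, hb, add_zero]))
      (fibNormRep_nonneg _ _)
  · intro c a _ ha
    have h := fibNormRep_sq (X := X) y (c • a)
    rw [ip_smul_left, ip_smul_right] at h
    simp only [ZeroAtInftyContinuousMap.smul_apply, ip_self_apply, ha] at h
    simpa using h

/-- The algebraic quotient `P / I_y P` is already separated: an element of zero norm in the fiber
lies in the span of the products `q · f` with `f y = 0`, without taking a closure. -/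
theorem fibMk_eq_iff [CompleteSpace E] (y : X) (p q : E) :
    fibMk X E y p = fibMk X E y q ↔ fibNormRep X E y (p - q) = 0 := by
  unfold fibMk
  rw [Submodule.Quotient.eq]
  refine ⟨fibNormRep_of_mem, fun h => ?_⟩
  obtain ⟨r, f, hr, -, hf⟩ := exists_factor (X := X) (p - q)
  rw [hr]
  exact Submodule.subset_span ⟨f, r, hf y h, rfl⟩

theorem fibNormRep_congr [CompleteSpace E] {y : X} {p q : E}
    (h : fibMk X E y p = fibMk X E y q) : fibNormRep X E y p = fibNormRep X E y q := by
  have h1 := (fibMk_eq_iff y p q).1 h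
  have h2 := fibNormRep_add_le y (p - q) q
  have h3 := fibNormRep_add_le y (q - p) p
  rw [fibNormRep_sub_comm] at h3
  rw [sub_add_cancel] at h2 h3
  linarith

theorem fibNormQ_mk [CompleteSpace E] (y : X) (p : E) :
    fibNormQ X E y (fibMk X E y p) = fibNormRep X E y p := by
  have : {r | ∃ q : E, fibMk X E y p = fibMk X E y q ∧ r = fibNormRep X E y q} =
      {fibNormRep X E y p} := by
    ext r
    constructor
    · rintro ⟨q, hq, rfl⟩
      exact (fibNormRep_congr hq).symm
    · rintro rfl
      exact ⟨p, rfl, rfl⟩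
  rw [fibNormQ, this, csInf_singleton]

theorem fibMk_msmul [CompleteSpace E] (y : X) (p : E) (f : C₀(X, ℂ)) :
    fibMk X E y (modSMul X p f) = f y • fibMk X E y p := by
  rw [← fibMk_smul, fibMk_eq_iff, ← sq_eq_zero_iff, fibNormRep_sq]
  simp only [ip_sub_left, ip_sub_right, ip_msmul_left, ip_msmul_right, ip_smul_left,
    ip_smul_right, ZeroAtInftyContinuousMap.sub_apply, ZeroAtInftyContinuousMap.mul_apply,
        ZeroAtInftyContinuousMap.star_apply, ZeroAtInftyContinuousMap.smul_apply, smul_eq_mul,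
        RCLike.star_def]
  ring_nf
  simp

end Fibers

/-! ### Isometries of Hilbert modules -/

section Isometries

variable {X : Type} [TopologicalSpace X]
variable {E : Type} [NormedAddCommGroup E] [NormedSpace ℂ E] [HilbertCzeroModule X E]
variable {F : Type} [NormedAddCommGroup F] [NormedSpace ℂ F] [HilbertCzeroModule X F]

theorem norm_eq_of_ip_eq {x : E} {x' : F} (h : modIP X x' x' = modIP X x x) : ‖x'‖ = ‖x‖ := by
  rw [← sq_eq_sq₀ (norm_nonneg _) (norm_nonneg _), norm_sq_eq_ip X, norm_sq_eq_ip X, h]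

/-- A bijection between generating families with the same Gram matrix extends to an isometry
preserving the `C₀(X)`-valued inner products. -/
theorem exists_isometry [CompleteSpace F] {I : Type*} (s : I → E) (t : I → F)
    (hst : ∀ i j, modIP X (t i) (t j) = modIP X (s i) (s j))
    (hd : Dense (Submodule.span ℂ (Set.range s) : Set E)) :
    ∃ U : E →L[ℂ] F, (∀ i, U (s i) = t i) ∧ ∀ x y, modIP X (U x) (U y) = modIP X x y := by
  let e := Finsupp.linearCombination ℂ s
  let f := Finsupp.linearCombination ℂ t
  have hef : ∀ x y, modIP X (f x) (f y) = modIP X (e x) (e y) := by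
    intro x y
    induction x using Finsupp.induction_linear with
    | zero => simp only [map_zero, ip_zero_left]
    | add a b ha hb => simp only [map_add, ip_add_left, ha, hb]
    | single i c =>
      induction y using Finsupp.induction_linear with
      | zero => simp only [map_zero, ip_zero_right]
      | add a b ha hb => simp only [map_add, ip_add_right, ha, hb]
      | single j c' =>
        simp only [e, f, Finsupp.linearCombination_single, ip_smul_left, ip_smul_right, hst]
  have hdr : DenseRange e := by
    have h := Finsupp.range_linearCombination (R := ℂ) (v := s)
    rw [← h] at hd
    exact hd
  have hn : ∀ x, ‖f x‖ ≤ 1 * ‖e x‖ := fun x => by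
    rw [one_mul, norm_eq_of_ip_eq (hef x x)]
  have hU : ∀ x, f.extendOfNorm e (e x) = f x := LinearMap.extendOfNorm_eq hdr ⟨1, hn⟩
  refine ⟨f.extendOfNorm e, fun i => ?_, ?_⟩
  · have := hU (Finsupp.single i 1)
    simpa [e, f, Finsupp.linearCombination_single] using this
  · have h1 : ∀ (x : I →₀ ℂ) (y : E),
        modIP X (f.extendOfNorm e (e x)) (f.extendOfNorm e y) = modIP X (e x) y := by
      intro x y
      refine hdr.induction_on y (isClosed_eq ?_ (continuous_ip_right _)) fun z => ?_
      · exact (continuous_ip_right _).comp (f.extendOfNorm e).continuous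
      · rw [hU, hU, hef]
    intro x y
    refine hdr.induction_on x (isClosed_eq ?_ (continuous_ip_left _)) fun z => h1 z y
    exact (continuous_ip_left _).comp (f.extendOfNorm e).continuous

/-- Linearity over `C₀(X)` is automatic for maps preserving the inner products. -/
theorem isometry_msmul (U : E →L[ℂ] F) (hU : ∀ x y, modIP X (U x) (U y) = modIP X x y)
    (x : E) (f : C₀(X, ℂ)) : U (modSMul X x f) = modSMul X (U x) f := by
  apply eq_of_ip_sub_self (X := X)
  ext y
  simp only [ip_sub_left, ip_sub_right, ip_msmul_left, ip_msmul_right, hU,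
    ZeroAtInftyContinuousMap.sub_apply, ZeroAtInftyContinuousMap.mul_apply,
    ZeroAtInftyContinuousMap.zero_apply]
  ring

theorem isometry_bijective [CompleteSpace E] {I : Type*} (t : I → F) (U : E →L[ℂ] F)
    (hU : ∀ x y, modIP X (U x) (U y) = modIP X x y) (s : I → E) (hs : ∀ i, U (s i) = t i)
    (hd : Dense (Submodule.span ℂ (Set.range t) : Set F)) : Function.Bijective U := by
  have hiso : Isometry U := AddMonoidHomClass.isometry_of_norm U fun x => norm_eq_of_ip_eq (hU x x)
  refine ⟨hiso.injective, ?_⟩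
  have hcl : IsClosed (Set.range U) := hiso.isClosedEmbedding.isClosed_range
  rw [← Set.range_eq_univ, ← hcl.closure_eq]
  refine Dense.closure_eq (hd.mono ?_)
  have : Submodule.span ℂ (Set.range t) ≤ LinearMap.range (U : E →ₗ[ℂ] F) := by
    rw [Submodule.span_le]
    rintro _ ⟨i, rfl⟩
    exact ⟨s i, hs i⟩
  exact this

end Isometries

/-! ### Groupoid actions on representatives -/

section Actions

variable {X : Type} [TopologicalSpace X] {Γ : LCGroupoid X}
variable {E : Type} [NormedAddCommGroup E] [NormedSpace ℂ E] [HilbertCzeroModule X E]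
variable {F : Type} [NormedAddCommGroup F] [NormedSpace ℂ F] [HilbertCzeroModule X F]

/-- The arrow `g` maps the class of `p` in the fiber over `s g` to the class of `p'` in the
fiber over `r g`. -/
def ActRel (A : GAction Γ E) (g : Γ.G) (p p' : E) : Prop :=
  A.act g (fibMk X E (Γ.s g) p) = fibMk X E (Γ.r g) p'

variable {A : GAction Γ E} {g : Γ.G} {p p' q q' : E}

theorem ActRel.exists (A : GAction Γ E) (g : Γ.G) (p : E) : ∃ p', ActRel A g p p' := by
  obtain ⟨p', h⟩ := fibMk_surjective (Γ.r g) (A.act g (fibMk X E (Γ.s g) p))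
  exact ⟨p', h.symm⟩

theorem ActRel.add (h : ActRel A g p p') (h' : ActRel A g q q') :
    ActRel A g (p + q) (p' + q') := by
  unfold ActRel at *
  rw [fibMk_add, A.act_add, h, h', fibMk_add]

theorem ActRel.smul (c : ℂ) (h : ActRel A g p p') : ActRel A g (c • p) (c • p') := by
  unfold ActRel at *
  rw [fibMk_smul, A.act_csmul, h, fibMk_smul]

theorem ActRel.sub (h : ActRel A g p p') (h' : ActRel A g q q') :
    ActRel A g (p - q) (p' - q') := by
  have := h.add (h'.smul (-1))
  simpa [sub_eq_add_neg] using this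

theorem ActRel.zero : ActRel A g 0 0 := by
  obtain ⟨p', h⟩ := ActRel.exists A g 0
  simpa using h.smul 0

theorem ActRel.msmul [CompleteSpace E] {f f' : C₀(X, ℂ)} (h : ActRel A g p p')
    (hf : f (Γ.s g) = f' (Γ.r g)) : ActRel A g (modSMul X p f) (modSMul X p' f') := by
  unfold ActRel at *
  rw [fibMk_msmul, A.act_csmul, h, fibMk_msmul, hf]

theorem ActRel.fibNorm [CompleteSpace E] (h : ActRel A g p p') :
    fibNormRep X E (Γ.r g) p' = fibNormRep X E (Γ.s g) p := by
  have := A.act_norm g (fibMk X E (Γ.s g) p)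
  rwa [show A.act g _ = _ from h, fibNormQ_mk, fibNormQ_mk] at this

theorem ActRel.congr_left [CompleteSpace E] (h : ActRel A g p p')
    (hq : fibNormRep X E (Γ.s g) (p - q) = 0) : ActRel A g q p' := by
  unfold ActRel at *
  rw [← h, (fibMk_eq_iff _ _ _).2 hq]

theorem ActRel.congr_right [CompleteSpace E] (h : ActRel A g p p')
    (hq : fibNormRep X E (Γ.r g) (p' - q') = 0) : ActRel A g p q' := by
  unfold ActRel at *
  rw [h, (fibMk_eq_iff _ _ _).2 hq]

/-- Two representatives of the same image agree in the fiber over `r g`. -/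
theorem ActRel.unique [CompleteSpace E] (h : ActRel A g p p') (h' : ActRel A g p q') :
    fibNormRep X E (Γ.r g) (p' - q') = 0 := by
  unfold ActRel at *
  rw [← fibMk_eq_iff, ← h, h']

theorem fibNormRep_add_sq (y : X) (p q : E) : fibNormRep X E y (p + q) ^ 2 =
    fibNormRep X E y p ^ 2 + fibNormRep X E y q ^ 2 + 2 * (modIP X p q y).re := by
  have h : (modIP X q p y).re = (modIP X p q y).re := by
    rw [← ip_conj_apply, Complex.conj_re]
  simp only [fibNormRep_sq, ip_add_left, ip_add_right, ZeroAtInftyContinuousMap.add_apply,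
    Complex.add_re, h]
  ring

/-- Polarization: a fiberwise isometric action preserves the fiberwise inner products. -/
theorem ActRel.ip [CompleteSpace E] (h : ActRel A g p p') (h' : ActRel A g q q') :
    modIP X p' q' (Γ.r g) = modIP X p q (Γ.s g) := by
  have key : ∀ {q q' : E}, ActRel A g q q' →
      (modIP X p' q' (Γ.r g)).re = (modIP X p q (Γ.s g)).re := by
    intro q q' h'
    have h1 := fibNormRep_add_sq (Γ.r g) p' q'
    have h2 := fibNormRep_add_sq (Γ.s g) p q
    rw [(h.add h').fibNorm, h.fibNorm, h'.fibNorm] at h1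
    linarith
  apply Complex.ext (key h')
  have := key (h'.smul Complex.I)
  simp only [ip_smul_right, ZeroAtInftyContinuousMap.smul_apply, smul_eq_mul, Complex.I_mul_re]
    at this
  linarith

/-- Equivariance of an isometry may be checked on a generating family. -/
theorem ActRel.map_of_generators [CompleteSpace E] [CompleteSpace F] {I : Type*}
    (U : E →L[ℂ] F) (hU : ∀ x y, modIP X (U x) (U y) = modIP X x y) (B : GAction Γ F) (s : I → E)
    (hd : Dense (Submodule.span ℂ (Set.range s) : Set E))
    (hs : ∀ i, ∃ x', ActRel A g (s i) x' ∧ ActRel B g (U (s i)) (U x')) {x x' : E}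
    (hx : ActRel A g x x') : ActRel B g (U x) (U x') := by
  have hspan : ∀ z ∈ Submodule.span ℂ (Set.range s),
      ∃ z', ActRel A g z z' ∧ ActRel B g (U z) (U z') := by
    intro z hz
    refine Submodule.span_induction ?_ ?_ ?_ ?_ hz
    · rintro _ ⟨i, rfl⟩
      exact hs i
    · exact ⟨0, ActRel.zero, by simpa using ActRel.zero⟩
    · rintro a b - - ⟨a', ha, ha'⟩ ⟨b', hb, hb'⟩
      exact ⟨a' + b', ha.add hb, by simpa using ha'.add hb'⟩
    · rintro c a - ⟨a', ha, ha'⟩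
      exact ⟨c • a', ha.smul c, by simpa using ha'.smul c⟩
  have hN : ∀ (y : X) (z : E), fibNormRep X F y (U z) = fibNormRep X E y z := fun y z => by
    unfold fibNormRep; rw [hU]
  obtain ⟨w, hw⟩ := ActRel.exists B g (U x)
  refine hw.congr_right (le_antisymm (le_of_forall_pos_le_add fun ε hε => ?_)
    (fibNormRep_nonneg _ _))
  obtain ⟨z, hz, hxz⟩ := Metric.mem_closure_iff.1 (hd x) (ε / 2) (by positivity)
  obtain ⟨z', hz1, hz2⟩ := hspan z hz
  have e1 : fibNormRep X F (Γ.r g) (w - U z') = fibNormRep X E (Γ.s g) (x - z) := by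
    rw [(hw.sub hz2).fibNorm, ← map_sub, hN]
  have e2 : fibNormRep X F (Γ.r g) (U z' - U x') = fibNormRep X E (Γ.s g) (x - z) := by
    rw [← map_sub, hN, (hz1.sub hx).fibNorm, fibNormRep_sub_comm]
  have e3 := fibNormRep_add_le (X := X) (Γ.r g) (w - U z') (U z' - U x')
  rw [sub_add_sub_cancel, e1, e2] at e3
  have e4 := fibNormRep_le_norm (Γ.s g) (x - z)
  rw [dist_eq_norm] at hxz
  linarith

end Actions

/-! ### Cutoff functions of proper groupoids -/

section Cutoff

variable {X : Type} [TopologicalSpace X] {Γ : LCGroupoid X}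

theorem exists_bump [T2Space X] [LocallyCompactSpace X] {K : Set X} (hK : IsCompact K) :
    ∃ b : X → ℝ, Continuous b ∧ HasCompactSupport b ∧ (∀ y, 0 ≤ b y) ∧ (∀ y, b y ≤ 1) ∧
      ∀ y ∈ K, b y = 1 := by
  obtain ⟨f, h1, h2, -, h3⟩ := exists_continuousMap_one_of_isCompact_subset_isOpen hK isOpen_univ
    (Set.subset_univ K)
  exact ⟨f, f.continuous, h2, fun y => (h3 y).1, fun y => (h3 y).2, fun y hy => h1 hy⟩

/-- The function `W` on the base is such that `W ∘ s` has compact support over every compact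
subset of the base, with respect to `r`. -/
def OrbitProper (Γ : LCGroupoid X) (W : X → ℝ) : Prop :=
  ∀ K : Set X, IsCompact K → ∃ L : Set Γ.G, IsCompact L ∧
    ∀ g, Γ.r g ∈ K → W (Γ.s g) ≠ 0 → g ∈ L

theorem OrbitProper.of_hasCompactSupport {W : X → ℝ} (hW : HasCompactSupport W) :
    OrbitProper Γ W := fun K hK =>
  ⟨(fun g => (Γ.r g, Γ.s g)) ⁻¹' (K ×ˢ tsupport W), Γ.proper.isCompact_preimage (hK.prod hW),
    fun _ hg hg' => ⟨hg, subset_tsupport _ hg'⟩⟩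

/-- The function `(W ∘ s) · (f ∘ r)` on the groupoid. -/
def pull (Γ : LCGroupoid X) (W : X → ℝ) (f : X → ℂ) (g : Γ.G) : ℂ :=
  (W (Γ.s g) : ℂ) * f (Γ.r g)

theorem continuous_pull {W : X → ℝ} {f : X → ℂ} (hW : Continuous W) (hf : Continuous f) :
    Continuous (pull Γ W f) :=
  (Complex.continuous_ofReal.comp (hW.comp Γ.s_cont)).mul (hf.comp Γ.r_cont)

theorem hasCompactSupport_pull {W : X → ℝ} {f : X → ℂ} (hW : OrbitProper Γ W)
    (hf : HasCompactSupport f) : HasCompactSupport (pull Γ W f) := by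
  obtain ⟨L, hL, h⟩ := hW _ hf
  refine HasCompactSupport.intro hL fun g hg => ?_
  by_contra hne
  refine hg (h g (subset_tsupport _ ?_) ?_)
  · exact fun h0 => hne (by simp [pull, h0])
  · exact fun h0 => hne (by simp [pull, h0])

variable (hs : HaarSystem X Γ)

theorem ae_r_eq (y : X) : ∀ᵐ g ∂(hs.lam y), Γ.r g = y := hs.concentrated y

/-- The function `y ↦ ∫_{G^y} W(s(g)) dλ^y(g)`. -/
def orbInt (W : X → ℝ) (y : X) : ℝ := ∫ g, W (Γ.s g) ∂(hs.lam y)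

/-- Over `y`, the function `W ∘ s` agrees with the compactly supported `pull Γ W f` as soon as
`f y = 1`, which gives access to the properties of the Haar system. -/
theorem orbInt_eq_pull (W : X → ℝ) {f : X → ℂ} {y : X} (hf : f y = 1) :
    ∫ g, pull Γ W f g ∂(hs.lam y) = (orbInt hs W y : ℂ) := by
  rw [orbInt, ← integral_complex_ofReal]
  refine MeasureTheory.integral_congr_ae ?_
  filter_upwards [ae_r_eq hs y] with g hg
  rw [pull, hg, hf, mul_one]

theorem exists_of_orbInt_ne_zero {W : X → ℝ} {y : X} (h : orbInt hs W y ≠ 0) :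
    ∃ g, Γ.r g = y ∧ W (Γ.s g) ≠ 0 := by
  by_contra hne
  push Not at hne
  refine h (MeasureTheory.integral_eq_zero_of_ae ?_)
  filter_upwards [ae_r_eq hs y] with g hg
  exact hne g hg

variable [T2Space X] [LocallyCompactSpace X]

theorem exists_bump_complex {K : Set X} (hK : IsCompact K) :
    ∃ b : X → ℂ, Continuous b ∧ HasCompactSupport b ∧ ∀ y ∈ K, b y = 1 := by
  obtain ⟨b, h1, h2, -, -, h3⟩ := exists_bump hK
  refine ⟨fun y => (b y : ℂ), Complex.continuous_ofReal.comp h1,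
    h2.comp_left (g := fun t : ℝ => (t : ℂ)) (by simp), fun y hy => by simp [h3 y hy]⟩

theorem continuous_orbInt {W : X → ℝ} (hW : Continuous W) (hp : OrbitProper Γ W) :
    Continuous (orbInt hs W) := by
  rw [continuous_iff_continuousAt]
  intro y
  obtain ⟨K, hK, hy⟩ := exists_compact_mem_nhds y
  obtain ⟨f, hf, hfc, hf1⟩ := exists_bump_complex hK
  have h := hs.integral_continuous (pull Γ W f) (continuous_pull hW hf)
    (hasCompactSupport_pull hp hfc)
  refine (Complex.continuous_re.comp h).continuousAt.congr ?_
  filter_upwards [hy] with z hz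
  rw [Function.comp_apply, orbInt_eq_pull hs W (hf1 z hz), Complex.ofReal_re]

theorem orbInt_invariant {W : X → ℝ} (hW : Continuous W) (hp : OrbitProper Γ W) (g : Γ.G) :
    orbInt hs W (Γ.s g) = orbInt hs W (Γ.r g) := by
  obtain ⟨f, hf, hfc, hf1⟩ := exists_bump_complex (isCompact_singleton (x := Γ.r g))
  have h := hs.left_invariant g (pull Γ W f) (continuous_pull hW hf) (hasCompactSupport_pull hp hfc)
  rw [orbInt_eq_pull hs W (hf1 _ rfl)] at h
  rw [← Complex.ofReal_inj, ← h, orbInt, ← integral_complex_ofReal]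
  refine MeasureTheory.integral_congr_ae ?_
  filter_upwards [ae_r_eq hs (Γ.s g)] with k hk
  rw [pull, Γ.r_mul g k hk.symm, Γ.s_mul g k hk.symm, hf1 _ rfl, mul_one]

theorem orbInt_pos {W : X → ℝ} (hW : Continuous W) (hp : OrbitProper Γ W) (h0 : ∀ y, 0 ≤ W y)
    {y : X} {g : Γ.G} (hg : Γ.r g = y) (hWg : W (Γ.s g) ≠ 0) : 0 < orbInt hs W y := by
  obtain ⟨b, hb, hbc, hb0, -, hb1⟩ := exists_bump (isCompact_singleton (x := y))
  have : MeasureTheory.IsFiniteMeasureOnCompacts (hs.lam y) :=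
    ⟨fun K hK => lt_top_iff_ne_top.2 (hs.finiteOnCompacts y K hK)⟩
  have hF : Continuous fun k => W (Γ.s k) * b (Γ.r k) :=
    (hW.comp Γ.s_cont).mul (hb.comp Γ.r_cont)
  have hFc : HasCompactSupport fun k => W (Γ.s k) * b (Γ.r k) := by
    obtain ⟨L, hL, h⟩ := hp _ hbc
    refine HasCompactSupport.intro hL fun g hg => ?_
    by_contra hne
    exact hg (h g (subset_tsupport _ (right_ne_zero_of_mul hne)) (left_ne_zero_of_mul hne))
  have heq : orbInt hs W y = ∫ k, W (Γ.s k) * b (Γ.r k) ∂(hs.lam y) := by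
    refine MeasureTheory.integral_congr_ae ?_
    filter_upwards [ae_r_eq hs y] with k hk
    rw [hk, hb1 y rfl, mul_one]
  rw [heq, MeasureTheory.integral_pos_iff_support_of_nonneg
    (fun k => mul_nonneg (h0 _) (hb0 _)) (hF.integrable_of_hasCompactSupport hFc)]
  refine pos_iff_ne_zero.2 (hs.full y _ hF.isOpen_support ⟨g, ?_, hg⟩)
  rw [Function.mem_support, hg, hb1 y rfl, mul_one]
  exact hWg

/-- A nonnegative continuous function that is orbit-proper and does not vanish identically on
any orbit.  It is a locally finite sum of bump functions `w n`, the `n`-th one being multiplied by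
the invariant function `χ n = max 0 (1 - n ∑_{j < n} ∫ w j ∘ s)`, which is `1` on the orbits not
met by the earlier bumps and vanishes for large `n` over each compact set. -/
theorem exists_orbit_weight [SecondCountableTopology X] (hs : HaarSystem X Γ) :
    ∃ W : X → ℝ, Continuous W ∧ OrbitProper Γ W ∧ (∀ y, 0 ≤ W y) ∧
      ∀ y, ∃ g, Γ.r g = y ∧ W (Γ.s g) ≠ 0 := by
  let K := CompactExhaustion.choice X
  choose w hw hwc hw0 _ hw1 using fun n => exists_bump (K.isCompact n)
  have hwp : ∀ n, OrbitProper Γ (w n) := fun n => .of_hasCompactSupport (hwc n)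
  let h : ℕ → X → ℝ := fun n => orbInt hs (w n)
  have hh : ∀ n, Continuous (h n) := fun n => continuous_orbInt hs (hw n) (hwp n)
  have hh0 : ∀ n y, 0 ≤ h n y := fun n y => MeasureTheory.integral_nonneg fun g => hw0 n _
  let χ : ℕ → X → ℝ := fun n y => max 0 (1 - n * ∑ j ∈ Finset.range n, h j y)
  have hχ : ∀ n, Continuous (χ n) := fun n => by fun_prop
  have hχ0 : ∀ n y, 0 ≤ χ n y := fun n y => le_max_left _ _
  have hχinv : ∀ n g, χ n (Γ.s g) = χ n (Γ.r g) := fun n g => by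
    simp only [χ, h, fun j => orbInt_invariant hs (hw j) (hwp j) g]
  have hpos : ∀ n, ∀ y ∈ K n, 0 < h n y := fun n y hy =>
    orbInt_pos hs (hw n) (hwp n) (hw0 n) (Γ.r_unit y) (by rw [Γ.s_unit, hw1 n y hy]; simp)
  have hloc : ∀ C : Set X, IsCompact C → ∃ N : ℕ, ∀ n, N ≤ n → ∀ y ∈ C, χ n y = 0 := by
    intro C hC
    obtain ⟨j, hj⟩ := K.exists_superset_of_isCompact hC
    obtain ⟨ε, hε, hεC⟩ := hC.exists_forall_le' (hh j).continuousOn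
      (a := 0) (fun y hy => hpos j y (hj hy))
    obtain ⟨m, hm⟩ := exists_nat_ge (1 / ε)
    refine ⟨max (j + 1) m, fun n hn y hy => max_eq_left ?_⟩
    have h1 : h j y ≤ ∑ i ∈ Finset.range n, h i y :=
      Finset.single_le_sum (f := fun i => h i y) (fun i _ => hh0 i y)
        (Finset.mem_range.2 (lt_of_lt_of_le (Nat.lt_succ_self j) ((le_max_left _ _).trans hn)))
    have h2 : (m : ℝ) ≤ n := by exact_mod_cast (le_max_right _ _).trans hn
    have h3 : 1 ≤ (n : ℝ) * ε := (div_le_iff₀ hε).1 (hm.trans h2)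
    have h4 : (n : ℝ) * ε ≤ n * ∑ i ∈ Finset.range n, h i y :=
      mul_le_mul_of_nonneg_left ((hεC y hy).trans h1) (by positivity)
    linarith
  have hfin : ∀ C : Set X, IsCompact C → ∃ N : ℕ, ∀ y ∈ C, ∀ n ∉ Finset.range N,
      w n y * χ n y = 0 := by
    intro C hC
    obtain ⟨N, hN⟩ := hloc C hC
    exact ⟨N, fun y hy n hn => by
      rw [hN n (by simpa using hn) y hy, mul_zero]⟩
  refine ⟨fun y => ∑' n, w n y * χ n y, ?_, ?_, ?_, ?_⟩
  · rw [continuous_iff_continuousAt]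
    intro y
    obtain ⟨C, hC, hy⟩ := exists_compact_mem_nhds y
    obtain ⟨N, hN⟩ := hfin C hC
    have hc : Continuous fun y => ∑ n ∈ Finset.range N, w n y * χ n y :=
      continuous_finsetSum _ fun n _ => (hw n).mul (hχ n)
    refine hc.continuousAt.congr ?_
    filter_upwards [hy] with z hz
    exact (tsum_eq_sum (hN z hz)).symm
  · intro C hC
    obtain ⟨N, hN⟩ := hloc C hC
    choose L hL hL' using fun n => hwp n C hC
    refine ⟨⋃ n ∈ Finset.range N, L n, (Finset.range N).isCompact_biUnion fun n _ => hL n, ?_⟩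
    intro g hg hne
    obtain ⟨n, hn⟩ : ∃ n, w n (Γ.s g) * χ n (Γ.s g) ≠ 0 := by
      by_contra hall
      push Not at hall
      exact hne (by simp only [hall, tsum_zero])
    have hn1 : n < N := by
      by_contra hlt
      rw [hχinv, hN n (not_lt.1 hlt) _ hg, mul_zero] at hn
      exact hn rfl
    simp only [Set.mem_iUnion]
    exact ⟨n, Finset.mem_range.2 hn1, hL' n g hg (left_ne_zero_of_mul hn)⟩
  · exact fun y => tsum_nonneg fun n => mul_nonneg (hw0 n y) (hχ0 n y)
  · intro y
    have hex : ∃ n, h n y ≠ 0 := by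
      obtain ⟨n, hn⟩ := K.exists_mem y
      exact ⟨n, (hpos n y hn).ne'⟩
    classical
    -- at the first index whose bump sees the orbit the cutoff factor equals one
    let n := Nat.find hex
    obtain ⟨g, hg, hwg⟩ := exists_of_orbInt_ne_zero hs (Nat.find_spec hex)
    have hχ1 : χ n (Γ.s g) = 1 := by
      rw [hχinv, hg]
      have : ∑ j ∈ Finset.range n, h j y = 0 := Finset.sum_eq_zero fun j hj => by
        simpa using Nat.find_min hex (Finset.mem_range.1 hj)
      simp [χ, this]
    obtain ⟨N, hN⟩ := hfin {Γ.s g} isCompact_singleton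
    have hsum : Summable fun k => w k (Γ.s g) * χ k (Γ.s g) :=
      summable_of_ne_finset_zero (hN _ rfl)
    have hle := hsum.le_tsum n fun k _ => mul_nonneg (hw0 k _) (hχ0 k _)
    rw [hχ1, mul_one] at hle
    exact ⟨g, hg, (lt_of_lt_of_le ((hw0 n _).lt_of_ne' hwg) hle).ne'⟩

/-- A cutoff function for the proper groupoid, obtained by normalizing the weight `W` of
`exists_orbit_weight` by its invariant orbit integral and taking a square root. -/
theorem exists_cutoff [SecondCountableTopology X] :
    ∃ c : X → ℝ, Continuous c ∧ OrbitProper Γ c ∧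
      ∀ y, ∫ g, c (Γ.s g) ^ 2 ∂(hs.lam y) = 1 := by
  obtain ⟨W, hW, hp, h0, hex⟩ := exists_orbit_weight hs
  have hH := continuous_orbInt hs hW hp
  have hpos : ∀ y, 0 < orbInt hs W y := fun y => by
    obtain ⟨g, hg, hne⟩ := hex y
    exact orbInt_pos hs hW hp h0 hg hne
  refine ⟨fun y => √(W y / orbInt hs W y), ?_, ?_, ?_⟩
  · exact (hW.div hH fun y => (hpos y).ne').sqrt
  · intro K hK
    obtain ⟨L, hL, h⟩ := hp K hK
    exact ⟨L, hL, fun g hg hne => h g hg fun h0 => hne (by simp [h0])⟩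
  · intro y
    have : ∀ᵐ g ∂(hs.lam y), √(W (Γ.s g) / orbInt hs W (Γ.s g)) ^ 2 =
        W (Γ.s g) / orbInt hs W y := by
      filter_upwards [ae_r_eq hs y] with g hg
      rw [Real.sq_sqrt (div_nonneg (h0 _) (hpos _).le), orbInt_invariant hs hW hp, hg]
    rw [MeasureTheory.integral_congr_ae this, MeasureTheory.integral_div]
    exact div_self (hpos y).ne'

end Cutoff

/-! ### The trivial module as a summand of `P_G` -/

section Embedding

variable {X : Type} [TopologicalSpace X]

/-- `C₀(X)` as a Hilbert module over itself, with `⟨f, g⟩ = f̄ g`. -/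
instance instC0Module : HilbertCzeroModule X C₀(X, ℂ) where
  msmul p f := p * f
  minner f g := star f * g
  msmul_add_left p q f := add_mul p q f
  msmul_add_right p f g := mul_add p f g
  msmul_mul p f g := _root_.mul_assoc p f g
  msmul_csmul_left c p f := smul_mul_assoc c p f
  msmul_csmul_right c p f := mul_smul_comm c p f
  minner_add_right p q r := mul_add _ q r
  minner_conj p q := by
    ext y
    change conj (p y) * q y = conj (conj (q y) * p y)
    rw [map_mul, Complex.conj_conj, mul_comm]
  minner_csmul_right c p q := mul_smul_comm c _ q
  minner_msmul_right p q f := (_root_.mul_assoc _ q f).symm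
  minner_self_re_nonneg p y := by
    have : (star p * p) y = conj (p y) * p y := rfl
    rw [this, ← Complex.normSq_eq_conj_mul_self, Complex.ofReal_re]
    exact Complex.normSq_nonneg _
  minner_self_im p y := by
    have : (star p * p) y = conj (p y) * p y := rfl
    rw [this, ← Complex.normSq_eq_conj_mul_self, Complex.ofReal_im]
  norm_eq p := by
    have h : ‖star p * p‖ = ‖p‖ * ‖p‖ := CStarRing.norm_star_mul_self
    rw [h, Real.sqrt_mul_self (norm_nonneg _)]

theorem ip_c0 (f g : C₀(X, ℂ)) : modIP X f g = star f * g := rfl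

/-- A continuous function with compact support, as an element of `C₀(X)`. -/
def ofCompactSupport (b : X → ℂ) (hb : Continuous b) (hbc : HasCompactSupport b) : C₀(X, ℂ) where
  toFun := b
  continuous_toFun := hb
  zero_at_infty' := hbc.is_zero_at_infty

theorem ofCompactSupport_apply (b : X → ℂ) (hb : Continuous b) (hbc : HasCompactSupport b)
    (y : X) : ofCompactSupport b hb hbc y = b y := rfl

theorem exists_c0_eq_one [T2Space X] [LocallyCompactSpace X] {K : Set X} (hK : IsCompact K) :
    ∃ b : C₀(X, ℂ), HasCompactSupport b ∧ (∀ y, ‖1 - b y‖ ≤ 1) ∧ ∀ y ∈ K, b y = 1 := by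
  obtain ⟨b, h1, h2, h3, h4, h5⟩ := exists_bump hK
  refine ⟨ofCompactSupport (fun y => (b y : ℂ)) (Complex.continuous_ofReal.comp h1)
    (h2.comp_left (g := fun t : ℝ => (t : ℂ)) (by simp)),
    h2.comp_left (g := fun t : ℝ => (t : ℂ)) (by simp), fun y => ?_, fun y hy => ?_⟩
  · rw [ofCompactSupport_apply, ← Complex.ofReal_one, ← Complex.ofReal_sub, Complex.norm_real,
      Real.norm_eq_abs, abs_of_nonneg (by linarith [h4 y])]
    linarith [h3 y]
  · rw [ofCompactSupport_apply, h5 y hy, Complex.ofReal_one]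

/-- In the fibers, elements of `C₀(X)` may be replaced by compactly supported functions. -/
theorem exists_compact_eq [T2Space X] [LocallyCompactSpace X] (f : C₀(X, ℂ)) (y : X) :
    ∃ f₀ : C₀(X, ℂ), HasCompactSupport f₀ ∧ f₀ y = f y := by
  obtain ⟨b, hb, -, hb1⟩ := exists_c0_eq_one (isCompact_singleton (x := y))
  refine ⟨f y • b, hb.comp_left (g := fun t : ℂ => f y • t) (by simp), ?_⟩
  rw [ZeroAtInftyContinuousMap.smul_apply, hb1 y rfl, smul_eq_mul, mul_one]

theorem dense_span_compactSupport [T2Space X] [LocallyCompactSpace X] :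
    Dense (Submodule.span ℂ (Set.range
      (Subtype.val : {f : C₀(X, ℂ) // HasCompactSupport f} → C₀(X, ℂ))) : Set C₀(X, ℂ)) := by
  intro f
  rw [Metric.mem_closure_iff]
  intro ε hε
  have hK : ∃ K : Set X, IsCompact K ∧ ∀ y ∉ K, ‖f y‖ < ε / 2 := by
    have h := f.zero_at_infty'.eventually (Metric.ball_mem_nhds (0 : ℂ) (half_pos hε))
    obtain ⟨K, hK, hKs⟩ := mem_cocompact.1 h
    exact ⟨K, hK, fun y hy => by simpa using hKs hy⟩
  obtain ⟨K, hK, hfK⟩ := hK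
  obtain ⟨b, hb, hb0, hb1⟩ := exists_c0_eq_one hK
  have hc : HasCompactSupport ⇑(b * f) := hb.mul_right (f' := ⇑f)
  refine ⟨b * f, Submodule.subset_span ⟨⟨b * f, hc⟩, rfl⟩, ?_⟩
  rw [dist_eq_norm]
  refine lt_of_le_of_lt (c0_norm_le (half_pos hε).le fun y => ?_) (half_lt_self hε)
  rw [ZeroAtInftyContinuousMap.sub_apply, ZeroAtInftyContinuousMap.mul_apply,
    show f y - b y * f y = (1 - b y) * f y by ring, norm_mul]
  by_cases hy : y ∈ K
  · rw [hb1 y hy]; simp; positivity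
  · calc ‖1 - b y‖ * ‖f y‖ ≤ 1 * ‖f y‖ := by gcongr; exact hb0 y
      _ ≤ ε / 2 := by rw [one_mul]; exact (hfK y hy).le

variable {Γ : LCGroupoid X}
variable {E : Type} [NormedAddCommGroup E] [NormedSpace ℂ E] [HilbertCzeroModule X E]

theorem isometry_fibNorm {F : Type} [NormedAddCommGroup F] [NormedSpace ℂ F]
    [HilbertCzeroModule X F] {U : F →L[ℂ] E} (hU : ∀ x y, modIP X (U x) (U y) = modIP X x y)
    (y : X) (x : F) : fibNormRep X E y (U x) = fibNormRep X F y x := by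
  unfold fibNormRep; rw [hU]

variable [CompleteSpace E]

/-- The image of the trivial module is complemented.  Writing `η = q · k` with `k` real, the
adjoint of `J` takes at `η` the value `⟨J k, q⟩`, formally `⟨J 1, q⟩ k`. -/
theorem exists_adjoint {J : C₀(X, ℂ) →L[ℂ] E} (hJ : ∀ f f', modIP X (J f) (J f') = modIP X f f')
    (η : E) : ∃ f, ∀ f', modIP X (J f') (η - J f) = 0 := by
  obtain ⟨q, k, rfl, hk, -⟩ := exists_factor (X := X) η
  refine ⟨modIP X (J k) q, fun f' => ?_⟩
  have h1 : modSMul X (J k) (star f') = modSMul X (J (star f')) k := by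
    rw [← isometry_msmul J hJ, ← isometry_msmul J hJ]
    exact congrArg J (mul_comm k (star f'))
  rw [ip_sub_right, ip_msmul_right, hJ, ip_c0]
  have h2 := ip_msmul_left (X := X) (J f') q k
  rw [hk] at h2
  have h3 : modSMul X (J f') k = modSMul X (J k) f' := by
    rw [← isometry_msmul J hJ, ← isometry_msmul J hJ]
    exact congrArg J (mul_comm f' k)
  rw [h3, ip_msmul_left] at h2
  rw [h2, mul_comm, sub_self]

variable [T2Space X] [LocallyCompactSpace X]

/-- The orthogonal complement of the trivial module is invariant: a representative of `g · η` can be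
chosen orthogonal to the image of `J`.  Subtracting from any representative its projection onto
that image does not change its class, since the action preserves the fiber inner products. -/
theorem ActRel.complement {A : GAction Γ E} {J : C₀(X, ℂ) →L[ℂ] E}
    (hJ : ∀ f f', modIP X (J f) (J f') = modIP X f f')
    (hJA : ∀ g f f', f (Γ.s g) = f' (Γ.r g) → ActRel A g (J f) (J f')) {η : E}
    (hη : ∀ f, modIP X (J f) η = 0) (g : Γ.G) :
    ∃ η', (∀ f, modIP X (J f) η' = 0) ∧ ActRel A g η η' := by
  obtain ⟨η', h⟩ := ActRel.exists A g η
  obtain ⟨f₀, h0⟩ := exists_adjoint hJ η'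
  refine ⟨η' - J f₀, h0, h.congr_right ?_⟩
  obtain ⟨b, -, -, hb1⟩ := exists_c0_eq_one (isCompact_singleton (x := Γ.s g))
  obtain ⟨b', -, -, hb1'⟩ := exists_c0_eq_one (isCompact_singleton (x := Γ.r g))
  have h2 := (hJA g b b' (by rw [hb1 _ rfl, hb1' _ rfl])).ip h
  have h3 := h0 b'
  rw [ip_sub_right, sub_eq_zero] at h3
  rw [hη, h3, hJ, ip_c0, ZeroAtInftyContinuousMap.mul_apply, ZeroAtInftyContinuousMap.star_apply,
    hb1' _ rfl, star_one, one_mul] at h2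
  rw [sub_sub_cancel, isometry_fibNorm hJ, ← sq_eq_zero_iff, fibNormRep_sq, ip_c0,
    ZeroAtInftyContinuousMap.mul_apply, h2]
  simp

variable [SecondCountableTopology X]

/-- The trivial module `C₀(X)` embeds isometrically and equivariantly into `P_G`, by
`f ↦ (c ∘ s) · (f ∘ r)` for a cutoff function `c`. -/
theorem exists_J {hs : HaarSystem X Γ} (d : PGData Γ hs E) (A : GAction Γ E)
    (hA : IsNaturalPGAction d A) :
    ∃ J : C₀(X, ℂ) →L[ℂ] E, (∀ f f', modIP X (J f) (J f') = modIP X f f') ∧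
      ∀ g f f', f (Γ.s g) = f' (Γ.r g) → ActRel A g (J f) (J f') := by
  obtain ⟨c, hc, hcp, hc1⟩ := exists_cutoff hs
  let t : {f : C₀(X, ℂ) // HasCompactSupport f} → E := fun f => d.emb
    ⟨pull Γ c f.1, continuous_pull hc (map_continuous f.1), hasCompactSupport_pull hcp f.2⟩
  obtain ⟨J, hJ, hJip⟩ := exists_isometry (X := X) Subtype.val t (fun f f' => by
    ext y
    have : ∀ᵐ g ∂(hs.lam y), conj (pull Γ c f.1 g) * pull Γ c f'.1 g =
        (conj (f.1 y) * f'.1 y) * ((c (Γ.s g) ^ 2 : ℝ) : ℂ) := by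
      filter_upwards [ae_r_eq hs y] with g hg
      simp only [pull, hg, map_mul, Complex.conj_ofReal, Complex.ofReal_pow]
      ring
    rw [show modIP X (t f) (t f') y = _ from d.emb_inner _ _ y,
      MeasureTheory.integral_congr_ae this, MeasureTheory.integral_const_mul,
      integral_complex_ofReal, hc1 y, Complex.ofReal_one, mul_one]
    rfl) dense_span_compactSupport
  refine ⟨J, hJip, fun g f f' hff => ?_⟩
  have hN : ∀ (y : X) (f f₀ : C₀(X, ℂ)), f₀ y = f y →
      fibNormRep X E y (J f₀ - J f) = 0 := fun y f f₀ h => by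
    rw [← sq_eq_zero_iff, fibNormRep_sq, ← map_sub, hJip, ip_c0,
      ZeroAtInftyContinuousMap.mul_apply, ZeroAtInftyContinuousMap.sub_apply, h, sub_self,
      mul_zero, Complex.zero_re]
  obtain ⟨f₀, h0, h0f⟩ := exists_compact_eq f (Γ.s g)
  obtain ⟨f₁, h1, h1f⟩ := exists_compact_eq f' (Γ.r g)
  have key : ActRel A g (J f₀) (J f₁) := by
    rw [hJ ⟨f₀, h0⟩, hJ ⟨f₁, h1⟩]
    refine hA g _ _ fun h hh => ?_
    have e : Γ.s (Γ.inv g) = Γ.r h := by rw [Γ.s_inv, hh]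
    simp only [pull]
    rw [Γ.s_mul _ _ e, Γ.r_mul _ _ e, Γ.r_inv, hh, h0f, h1f, hff]
  exact (key.congr_left (hN _ _ _ h0f)).congr_right (hN _ _ _ h1f)

end Embedding

/-! ### Coordinates and tensor products -/

section Coordinates

variable {X : Type} [TopologicalSpace X] {Γ : LCGroupoid X}
variable {E : Type} [NormedAddCommGroup E] [NormedSpace ℂ E] [HilbertCzeroModule X E]
variable {S : Type} [NormedAddCommGroup S] [NormedSpace ℂ S] [HilbertCzeroModule X S]

theorem exists_coord (d : InftySumData X (fun _ => E) S) (i : ℕ) (η : E) :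
    ∃ x : S, ∀ j, d.proj j x = if j = i then η else 0 := by
  refine d.proj_surjective (fun j => if j = i then η else 0)
    (summable_of_ne_finset_zero (s := {i}) fun j hj => ?_)
  rw [if_neg (by simpa using hj), ip_zero_left]

/-- The embedding of `E` onto the `i`-th summand of `⊕ E`. -/
def coord (d : InftySumData X (fun _ => E) S) (i : ℕ) (η : E) : S := (exists_coord d i η).choose

variable (d : InftySumData X (fun _ => E) S)

theorem proj_coord (i : ℕ) (η : E) (j : ℕ) :
    d.proj j (coord d i η) = if j = i then η else 0 := (exists_coord d i η).choose_spec j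

theorem coord_add (i : ℕ) (η η' : E) : coord d i (η + η') = coord d i η + coord d i η' := by
  refine d.proj_injective _ _ fun j => ?_
  rw [d.proj_add]
  simp only [proj_coord]
  split_ifs <;> simp

theorem ip_coord_left (i : ℕ) (η : E) (q : S) :
    modIP X (coord d i η) q = modIP X η (d.proj i q) := by
  refine (d.proj_inner _ _).unique ?_
  convert hasSum_single i
    (f := fun j => modIP X (d.proj j (coord d i η)) (d.proj j q)) ?_ using 1
  · simp [proj_coord]
  · intro j hj
    simp only [proj_coord, if_neg hj, ip_zero_left]

theorem ip_coord_same (i : ℕ) (η η' : E) :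
    modIP X (coord d i η) (coord d i η') = modIP X η η' := by
  rw [ip_coord_left, proj_coord, if_pos rfl]

theorem ip_coord_ne {i j : ℕ} (h : i ≠ j) (η η' : E) :
    modIP X (coord d i η) (coord d j η') = 0 := by
  rw [ip_coord_left, proj_coord, if_neg h, ip_zero_right]

theorem tendsto_sum_coord (q : S) :
    Tendsto (fun n => ∑ i ∈ Finset.range n, coord d i (d.proj i q)) atTop (𝓝 q) := by
  have h := (d.proj_inner q q).tendsto_sum_nat
  rw [tendsto_iff_norm_sub_tendsto_zero] at h ⊢
  have h2 : ∀ n, ‖∑ i ∈ Finset.range n, coord d i (d.proj i q) - q‖ =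
      √‖∑ i ∈ Finset.range n, modIP X (d.proj i q) (d.proj i q) - modIP X q q‖ := by
    intro n
    rw [HilbertCzeroModule.norm_eq (Y := X), norm_sub_rev (∑ i ∈ Finset.range n, modIP X _ _)]
    congr 2
    change modIP X _ _ = _
    have e1 : ∀ i ∈ Finset.range n, modIP X (coord d i (d.proj i q))
        (∑ j ∈ Finset.range n, coord d j (d.proj j q)) = modIP X (d.proj i q) (d.proj i q) := by
      intro i hi
      rw [ip_sum_right, Finset.sum_eq_single_of_mem i hi, ip_coord_same]
      exact fun j _ hj => ip_coord_ne d hj.symm _ _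
    have e2 : modIP X (∑ i ∈ Finset.range n, coord d i (d.proj i q)) q =
        ∑ i ∈ Finset.range n, modIP X (d.proj i q) (d.proj i q) := by
      rw [ip_sum_left]
      exact Finset.sum_congr rfl fun i _ => ip_coord_left d i _ q
    have e3 : modIP X q (∑ i ∈ Finset.range n, coord d i (d.proj i q)) =
        ∑ i ∈ Finset.range n, modIP X (d.proj i q) (d.proj i q) := by
      rw [← ip_star, e2, star_sum]
      exact Finset.sum_congr rfl fun i _ => ip_star _ _
    rw [ip_sub_left, ip_sub_right, ip_sub_right, e2, e3, ip_sum_left, Finset.sum_congr rfl e1]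
    abel
  simp only [h2]
  have h3 := (Real.continuous_sqrt.tendsto 0).comp h
  rwa [Real.sqrt_zero] at h3

/-- The coordinate embeddings are equivariant.  A representative `x` of `g · ι_i η` has the right
coordinates in the fiber over `r g`, and the fiber norm is determined by the coordinates. -/
theorem ActRel.coord [CompleteSpace E] [CompleteSpace S] {A : GAction Γ E} {B : GAction Γ S}
    (h : IsCoordinateInftyAction d (fun _ => A) B) {g : Γ.G} {η η' : E} (hη : ActRel A g η η')
    (i : ℕ) : ActRel B g (coord d i η) (coord d i η') := by
  obtain ⟨x, hx⟩ := ActRel.exists B g (Stabilization.coord d i η)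
  refine hx.congr_right ?_
  have hz : ∀ j, fibNormRep X E (Γ.r g) (d.proj j (x - Stabilization.coord d i η')) = 0 := by
    intro j
    have hj : ActRel A g (if j = i then η else 0) (d.proj j x) := by
      have := h g _ _ hx j
      rwa [proj_coord] at this
    have e : d.proj j (x - Stabilization.coord d i η') =
        d.proj j x - if j = i then η' else 0 := by
      rw [← proj_coord d i η' j, eq_sub_iff_add_eq, ← d.proj_add, sub_add_cancel]
    rw [e]
    split_ifs at hj ⊢
    · exact hj.unique hη
    · exact hj.unique ActRel.zero
  have hs := (d.proj_inner (x - Stabilization.coord d i η') (x - Stabilization.coord d i η'))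
  have hev : Continuous fun f : C₀(X, ℂ) => f (Γ.r g) :=
    LipschitzWith.continuous (K := 1) (LipschitzWith.of_dist_le_mul fun f f' => by
      rw [NNReal.coe_one, one_mul, dist_eq_norm, dist_eq_norm]
      exact c0_norm_apply_le (f - f') _)
  let ev : C₀(X, ℂ) →+ ℂ :=
    { toFun := fun f => f (Γ.r g), map_zero' := rfl, map_add' := fun _ _ => rfl }
  have hs' := hs.map ev hev
  have h0 : (⇑ev ∘ fun j => modIP X (d.proj j (x - Stabilization.coord d i η'))
      (d.proj j (x - Stabilization.coord d i η'))) = fun _ => 0 := by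
    funext j
    change modIP X _ _ (Γ.r g) = 0
    rw [ip_self_apply, hz]
    simp
  rw [h0] at hs'
  rw [← sq_eq_zero_iff, fibNormRep_sq]
  exact congrArg Complex.re (hs'.unique hasSum_zero)

end Coordinates

section Density

variable {X : Type} [TopologicalSpace X]
variable {E : Type} [NormedAddCommGroup E] [NormedSpace ℂ E] [HilbertCzeroModule X E]
variable {P₀ : Type} [NormedAddCommGroup P₀] [NormedSpace ℂ P₀] [HilbertCzeroModule X P₀]
variable {Q : Type} [NormedAddCommGroup Q] [NormedSpace ℂ Q] [HilbertCzeroModule X Q]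
variable {R : Type} [NormedAddCommGroup R] [NormedSpace ℂ R] [HilbertCzeroModule X R]

theorem norm_tensor_le (td : TensorData X P₀ Q R) (p : P₀) (q : Q) :
    ‖td.t p q‖ ≤ ‖p‖ * ‖q‖ := by
  rw [← sq_le_sq₀ (norm_nonneg _) (by positivity), mul_pow, norm_sq_eq_ip X, norm_sq_eq_ip X,
    norm_sq_eq_ip X, td.t_inner]
  exact norm_mul_le _ _

theorem continuous_tensor (td : TensorData X P₀ Q R) (p : P₀) : Continuous (td.t p) := by
  let L : Q →ₗ[ℂ] R :=
    { toFun := td.t p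
      map_add' := td.t_add_right p
      map_smul' := fun c q => td.t_csmul_right c p q }
  exact (L.mkContinuous ‖p‖ (norm_tensor_le td p)).continuous

/-- A closed subspace of `P₀ ⊗ ⊕ E` containing the elementary tensors with one nonzero coordinate
is everything. -/
theorem mem_of_coord_mem (d : InftySumData X (fun _ => E) Q) (td : TensorData X P₀ Q R)
    (N : Submodule ℂ R) (hN : IsClosed (N : Set R))
    (h : ∀ p i η, td.t p (coord d i η) ∈ N) (x : R) : x ∈ N := by
  have h1 : ∀ p q, td.t p q ∈ N := by
    intro p q
    let L : Q →ₗ[ℂ] R :=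
      { toFun := td.t p
        map_add' := td.t_add_right p
        map_smul' := fun c q => td.t_csmul_right c p q }
    refine hN.mem_of_tendsto (((continuous_tensor td p).tendsto q).comp (tendsto_sum_coord d q))
      (Eventually.of_forall fun n => ?_)
    change L (∑ i ∈ Finset.range n, coord d i (d.proj i q)) ∈ N
    rw [map_sum]
    exact N.sum_mem fun i _ => h p i _
  rw [← SetLike.mem_coe, ← hN.closure_eq, Metric.mem_closure_iff]
  intro ε hε
  obtain ⟨n, ps, qs, hn⟩ := td.t_dense x ε hε
  exact ⟨_, N.sum_mem fun i _ => h1 (ps i) (qs i), by rwa [dist_eq_norm]⟩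

end Density

/-! ### The absorption isomorphism -/

/-- **Proposition 3.2.**  Let `G` be a second countable locally compact Hausdorff
proper groupoid with unit space `Y` and left Haar system, and let `P` be a `G`-Hilbert
module.  Then there is a `G`-equivariant unitary isomorphism
`P ⊕ (P ⊗_{C₀(Y)} P_G^∞) ≅ P ⊗_{C₀(Y)} P_G^∞`. -/
theorem absorption_of_P
    (Y : Type) [TopologicalSpace Y] [T2Space Y] [LocallyCompactSpace Y]
    [SecondCountableTopology Y]
    (Gp : LCGroupoid Y) (hs : HaarSystem Y Gp)
    (P : Type) [NormedAddCommGroup P] [NormedSpace ℂ P] [CompleteSpace P]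
    [SecondCountableTopology P] [HilbertCzeroModule Y P] (AP : GAction Gp P)
    -- P_G with its natural action
    (PG : Type) [NormedAddCommGroup PG] [NormedSpace ℂ PG] [CompleteSpace PG]
    [SecondCountableTopology PG] [HilbertCzeroModule Y PG]
    (d : PGData Gp hs PG) (APG : GAction Gp PG) (hAPG : IsNaturalPGAction d APG)
    -- P_G^∞ with the coordinatewise action
    (PGinf : Type) [NormedAddCommGroup PGinf] [NormedSpace ℂ PGinf] [CompleteSpace PGinf]
    [SecondCountableTopology PGinf] [HilbertCzeroModule Y PGinf]
    (dinf : InftySumData Y (fun _ => PG) PGinf) (APGinf : GAction Gp PGinf)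
    (hinf : IsCoordinateInftyAction dinf (fun _ => APG) APGinf)
    -- T = P ⊗ P_G^∞ with the diagonal action
    (T : Type) [NormedAddCommGroup T] [NormedSpace ℂ T] [CompleteSpace T]
    [SecondCountableTopology T] [HilbertCzeroModule Y T]
    (td : TensorData Y P PGinf T) (AT : GAction Gp T)
    (hT : IsDiagonalAction td AP APGinf AT)
    -- S = P ⊕ T with the coordinatewise action
    (S : Type) [NormedAddCommGroup S] [NormedSpace ℂ S] [CompleteSpace S]
    [SecondCountableTopology S] [HilbertCzeroModule Y S]
    (sd : SumData Y P T S) (AS : GAction Gp S)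
    (hS : IsCoordinateSumAction sd AP AT AS) :
    GEquiv AS AT := by
  obtain ⟨J, hJ, hJA⟩ := exists_J d APG hAPG
  -- generators: `p ⊗ f` of `P ⊗ C₀(Y)`, and `p ⊗ ι_i η`, `p ⊗ ι_i (J f)` with `η` orthogonal to
  -- the image of `J`
  let I := (P × C₀(Y, ℂ)) ⊕ (P × ℕ × {η : PG // ∀ f, modIP Y (J f) η = 0}) ⊕ (P × ℕ × C₀(Y, ℂ))
  let s : I → S := fun x => match x with
    | .inl (p, f) => sd.inl (modSMul Y p f)
    | .inr (.inl (p, i, η)) => sd.inr (td.t p (coord dinf i η.1))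
    | .inr (.inr (p, i, f)) => sd.inr (td.t p (coord dinf i (J f)))
  let t : I → T := fun x => match x with
    | .inl (p, f) => td.t p (coord dinf 0 (J f))
    | .inr (.inl (p, i, η)) => td.t p (coord dinf i η.1)
    | .inr (.inr (p, i, f)) => td.t p (coord dinf (i + 1) (J f))
  have inner_rl : ∀ (q : T) (p : P), modIP Y (sd.inr q) (sd.inl p) = 0 := fun q p => by
    rw [← ip_star, sd.inner_lr, star_zero]
  have hcr : ∀ (i j : ℕ) (η : PG) (f : C₀(Y, ℂ)), (∀ f, modIP Y (J f) η = 0) →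
      modIP Y (coord dinf i (J f)) (coord dinf j η) = 0 := by
    intro i j η f hη
    rw [ip_coord_left, proj_coord]
    split_ifs
    · exact hη f
    · exact ip_zero_right _
  have hcl : ∀ (i j : ℕ) (η : PG) (f : C₀(Y, ℂ)), (∀ f, modIP Y (J f) η = 0) →
      modIP Y (coord dinf j η) (coord dinf i (J f)) = 0 := by
    intro i j η f hη
    rw [← ip_star, hcr i j η f hη, star_zero]
  have hgram : ∀ a b, modIP Y (t a) (t b) = modIP Y (s a) (s b) := by
    rintro (⟨p, f⟩ | ⟨p, i, η, hη⟩ | ⟨p, i, f⟩) (⟨p', f'⟩ | ⟨p', i', η', hη'⟩ | ⟨p', i', f'⟩)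
    · simp only [s, t, td.t_inner, sd.inner_ll, ip_coord_same, hJ, ip_msmul_left, ip_msmul_right,
        ip_c0]
      ext y
      simp only [ZeroAtInftyContinuousMap.mul_apply]
      ring
    · simp only [s, t, td.t_inner, sd.inner_lr, hcr _ _ _ _ hη', mul_zero]
    · simp only [s, t, td.t_inner, sd.inner_lr, ip_coord_ne dinf (Nat.succ_ne_zero i').symm,
        mul_zero]
    · simp only [s, t, td.t_inner, inner_rl, hcl _ _ _ _ hη, mul_zero]
    · simp only [s, t, sd.inner_rr]
    · simp only [s, t, sd.inner_rr, td.t_inner, hcl _ _ _ _ hη]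
    · simp only [s, t, td.t_inner, inner_rl, ip_coord_ne dinf (Nat.succ_ne_zero i), mul_zero]
    · simp only [s, t, sd.inner_rr, td.t_inner, hcr _ _ _ _ hη']
    · simp only [s, t, sd.inner_rr, td.t_inner]
      rcases eq_or_ne i i' with rfl | h
      · rw [ip_coord_same, ip_coord_same]
      · rw [ip_coord_ne dinf h, ip_coord_ne dinf (fun e => h (Nat.succ_injective e))]
  -- every vector of `P_G` is the sum of one in the image of `J` and one orthogonal to it
  have hsplit : ∀ (N : Submodule ℂ T), (∀ p i f, td.t p (coord dinf i (J f)) ∈ N) →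
      (∀ p i η, (∀ f, modIP Y (J f) η = 0) → td.t p (coord dinf i η) ∈ N) →
      ∀ p i η, td.t p (coord dinf i η) ∈ N := by
    intro N h1 h2 p i η
    obtain ⟨f, hf⟩ := exists_adjoint hJ η
    rw [← sub_add_cancel η (J f), coord_add, td.t_add_right]
    exact N.add_mem (h2 p i _ hf) (h1 p i f)
  have hdt : Dense (Submodule.span ℂ (Set.range t) : Set T) := by
    let N := (Submodule.span ℂ (Set.range t)).topologicalClosure
    have ht : ∀ a, t a ∈ N := fun a =>
      Submodule.le_topologicalClosure _ (Submodule.subset_span ⟨a, rfl⟩)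
    refine fun x => mem_of_coord_mem dinf td N (Submodule.isClosed_topologicalClosure _)
      (hsplit N ?_ fun p i η hη => ht (.inr (.inl (p, i, ⟨η, hη⟩)))) x
    rintro p (_ | i) f
    · exact ht (.inl (p, f))
    · exact ht (.inr (.inr (p, i, f)))
  have hds : Dense (Submodule.span ℂ (Set.range s) : Set S) := by
    let N := (Submodule.span ℂ (Set.range s)).topologicalClosure
    have hN : IsClosed (N : Set S) := Submodule.isClosed_topologicalClosure _
    have hs' : ∀ a, s a ∈ N := fun a =>
      Submodule.le_topologicalClosure _ (Submodule.subset_span ⟨a, rfl⟩)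
    let L : T →ₗᵢ[ℂ] S :=
      { toFun := sd.inr
        map_add' := sd.inr_add
        map_smul' := sd.inr_csmul
        norm_map' := fun x => norm_eq_of_ip_eq (sd.inner_rr x x) }
    have hr : ∀ x, sd.inr x ∈ N := fun x =>
      mem_of_coord_mem dinf td (N.comap L.toLinearMap) (hN.preimage L.continuous)
        (hsplit _ (fun p i f => hs' (.inr (.inr (p, i, f))))
          fun p i η hη => hs' (.inr (.inl (p, i, ⟨η, hη⟩)))) x
    intro x
    obtain ⟨p, q, rfl⟩ := sd.total x
    obtain ⟨p₀, f, rfl, -⟩ := exists_factor (X := Y) p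
    exact N.add_mem (hs' (.inl (p₀, f))) (hr q)
  obtain ⟨U, hU, hUip⟩ := exists_isometry (X := Y) s t hgram hds
  refine ⟨U, isometry_bijective (X := Y) t U hUip s hU hdt, map_add U, map_smul U,
    isometry_msmul U hUip, hUip, fun g x x' hx => ?_⟩
  refine ActRel.map_of_generators (X := Y) U hUip AT s hds ?_ hx
  have hrep : ∀ f : C₀(Y, ℂ), ∃ f' : C₀(Y, ℂ), f (Gp.s g) = f' (Gp.r g) := by
    intro f
    obtain ⟨b, -, -, hb⟩ := exists_c0_eq_one (isCompact_singleton (x := Gp.r g))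
    refine ⟨f (Gp.s g) • b, ?_⟩
    rw [ZeroAtInftyContinuousMap.smul_apply, hb _ rfl, smul_eq_mul, mul_one]
  have hJc : ∀ {f f' : C₀(Y, ℂ)}, f (Gp.s g) = f' (Gp.r g) → ∀ i,
      ActRel APGinf g (coord dinf i (J f)) (coord dinf i (J f')) := fun h i =>
    (hJA g _ _ h).coord dinf hinf i
  have hUt : ∀ a b : I, ActRel AT g (t a) (t b) → ActRel AT g (U (s a)) (U (s b)) := by
    intro a b h
    rwa [hU, hU]
  rintro (⟨p, f⟩ | ⟨p, i, η, hη⟩ | ⟨p, i, f⟩) <;> obtain ⟨p', hp⟩ := ActRel.exists AP g p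
  · obtain ⟨f', hf⟩ := hrep f
    refine ⟨s (.inl (p', f')), hS.1 g _ _ (hp.msmul hf),
      hUt (.inl (p, f)) (.inl (p', f')) (hT g _ _ _ _ hp (hJc hf 0))⟩
  · obtain ⟨η', hη', h⟩ := ActRel.complement hJ hJA hη g
    have h2 := hT g _ _ _ _ hp (h.coord dinf hinf i)
    refine ⟨s (.inr (.inl (p', i, ⟨η', hη'⟩))), hS.2 g _ _ h2,
      hUt (.inr (.inl (p, i, ⟨η, hη⟩))) (.inr (.inl (p', i, ⟨η', hη'⟩))) h2⟩
  · obtain ⟨f', hf⟩ := hrep f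
    refine ⟨s (.inr (.inr (p', i, f'))), hS.2 g _ _ (hT g _ _ _ _ hp (hJc hf i)),
      hUt (.inr (.inr (p, i, f))) (.inr (.inr (p', i, f'))) (hT g _ _ _ _ hp (hJc hf (i + 1)))⟩

end Stabilization
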